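/- Let s > 3/2 and ε, μ ∈ (0,1]. There is a constant c = c(s), independent of ε, μ and T, such that for every T > 0 and every solution η of the Whitham equation ∂_t η + √T_μ(D) ∂_x η + (ε/2) ∂_x(η²) = 0 on [0,T], with t ↦ η(·,t) a C¹ curve in the Schwartz space 𝓢(ℝ) and η(·,0) = η₀, one has ‖η(t)‖_{H^s}^2 ≤ exp( c ε ∫_0^t ‖∂_x η(τ)‖_{L^∞} dτ ) ‖η₀‖_{H^s}^2 for all t ∈ [0,T]. -/

import Mathlib

noncomputable section

open MeasureTheory SchwartzMap
open scoped FourierTransform ENNReal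

/-- The Japanese bracket `⟨x⟩ = (1 + x²)^{1/2}`. -/
def jap (x : ℝ) : ℝ := (1 + x ^ 2) ^ ((1 : ℝ) / 2)

/-- The symbol `T_μ(ξ) = tanh(√μ |ξ|)/(√μ |ξ|)` for `ξ ≠ 0`, with value `1` at `ξ = 0`. -/
def Tsymb (μ ξ : ℝ) : ℝ :=
  if ξ = 0 then 1 else Real.tanh (Real.sqrt μ * |ξ|) / (Real.sqrt μ * |ξ|)

/-- Complexification of a real-valued function. -/
def cc (f : ℝ → ℝ) : ℝ → ℂ := fun x => (f x : ℂ)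

/-- The multiplier `√T_μ(D)`, `(√T_μ(D) g)^(ξ) = T_μ(ξ)^{1/2} ĝ(ξ)`. -/
def sqrtTmul (μ : ℝ) (g : ℝ → ℂ) : ℝ → ℂ :=
  𝓕⁻ (fun ξ : ℝ => ((Real.sqrt (Tsymb μ ξ) : ℝ) : ℂ) * 𝓕 g ξ)

/-- The `H^s`-norm `‖f‖_{H^s} = ‖⟨ξ⟩^s f̂‖_{L²}` (as an extended nonnegative real). -/
def HsNorm (s : ℝ) (f : ℝ → ℂ) : ℝ≥0∞ :=
  eLpNorm (fun ξ : ℝ => jap ξ ^ s * ‖𝓕 f ξ‖) 2 volume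

/-- Complexification as a map of Schwartz spaces. -/
def cS : 𝓢(ℝ, ℝ) →L[ℝ] 𝓢(ℝ, ℂ) := postcompCLM Complex.ofRealCLM

/-- Derivative on Schwartz space. -/
def dd : 𝓢(ℝ, ℝ) →L[ℝ] 𝓢(ℝ, ℝ) := derivCLM ℝ ℝ

/-- Product of Schwartz functions. -/
def pm (u v : 𝓢(ℝ, ℝ)) : 𝓢(ℝ, ℝ) := pairing (ContinuousLinearMap.mul ℝ ℝ) u v

/-- Iterated forward differences. -/
def DD (h : ℝ) : ℕ → 𝓢(ℝ, ℝ) → 𝓢(ℝ, ℝ)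
  | 0, u => u
  | k + 1, u => compSubConstCLM ℝ (-h) (DD h k u) - DD h k u

lemma cS_apply (u : 𝓢(ℝ, ℝ)) (x : ℝ) : cS u x = (u x : ℂ) := rfl

lemma cS_coe (u : 𝓢(ℝ, ℝ)) : (⇑(cS u) : ℝ → ℂ) = cc ⇑u := rfl

lemma dd_apply (u : 𝓢(ℝ, ℝ)) (x : ℝ) : dd u x = deriv u x := rfl

lemma dd_hasDerivAt (u : 𝓢(ℝ, ℝ)) (x : ℝ) : HasDerivAt u (dd u x) x := u.hasDerivAt x

lemma pm_apply (u v : 𝓢(ℝ, ℝ)) (x : ℝ) : pm u v x = u x * v x := by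
  simp [pm]

lemma DD_zero (h : ℝ) (u : 𝓢(ℝ, ℝ)) : DD h 0 u = u := rfl

lemma DD_succ (h : ℝ) (k : ℕ) (u : 𝓢(ℝ, ℝ)) (x : ℝ) :
    DD h (k + 1) u x = DD h k u (x + h) - DD h k u x := by
  simp [DD]

lemma DD_succ' (h : ℝ) (k : ℕ) (u : 𝓢(ℝ, ℝ)) : DD h (k + 1) u = DD h k (DD h 1 u) := by
  induction k with
  | zero => rfl
  | succ k ih =>
    ext x
    rw [DD_succ, ih, DD_succ]

lemma DD_add (h : ℝ) (j k : ℕ) (u : 𝓢(ℝ, ℝ)) : DD h (k + j) u = DD h j (DD h k u) := by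
  induction j with
  | zero => rfl
  | succ j ih =>
    ext x
    rw [← add_assoc, DD_succ, ih, DD_succ]

lemma dd_DD (h : ℝ) (k : ℕ) (u : 𝓢(ℝ, ℝ)) : dd (DD h k u) = DD h k (dd u) := by
  induction k with
  | zero => rfl
  | succ k ih =>
    ext x
    have h1 : HasDerivAt (fun y => DD h k u (y + h) - DD h k u y)
        (dd (DD h k u) (x + h) - dd (DD h k u) x) x :=
      ((dd_hasDerivAt (DD h k u) (x + h)).comp_add_const x h).sub (dd_hasDerivAt _ x)
    have h2 : (⇑(DD h (k + 1) u) : ℝ → ℝ) = fun y => DD h k u (y + h) - DD h k u y := by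
      ext y; exact DD_succ h k u y
    rw [DD_succ, dd_apply, h2, h1.deriv, ih]

lemma leibniz (h : ℝ) (u v : 𝓢(ℝ, ℝ)) (m : ℕ) : ∀ x : ℝ,
    DD h m (pm u v) x =
      ∑ k ∈ Finset.range (m + 1), (m.choose k : ℝ) * (DD h k u x * DD h (m - k) v (x + k * h)) := by
  induction m with
  | zero => intro x; simp [DD_zero, pm_apply]
  | succ m ih =>
    intro x
    rw [DD_succ, ih, ih]
    have key : ∀ k ∈ Finset.range (m + 1),
        (m.choose k : ℝ) * (DD h k u (x + h) * DD h (m - k) v (x + h + k * h))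
          - (m.choose k : ℝ) * (DD h k u x * DD h (m - k) v (x + k * h))
        = (m.choose k : ℝ) * (DD h (k + 1) u x * DD h (m - k) v (x + (k + 1 : ℕ) * h))
          + (m.choose k : ℝ) * (DD h k u x * DD h (m + 1 - k) v (x + k * h)) := by
      intro k hk
      have hk' : m + 1 - k = (m - k) + 1 := by
        have := Finset.mem_range.1 hk; omega
      rw [hk', DD_succ, DD_succ]
      have e : x + h + k * h = x + (k + 1 : ℕ) * h := by push_cast; ring
      have e2 : x + k * h + h = x + (k + 1 : ℕ) * h := by push_cast; ring
      rw [e, e2]; ring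
    rw [← Finset.sum_sub_distrib, Finset.sum_congr rfl key, Finset.sum_add_distrib]
    rw [Finset.sum_range_succ' _ (m + 1)]
    have e3 : ∀ k ∈ Finset.range (m + 1),
        ((m + 1).choose (k + 1) : ℝ) * (DD h (k + 1) u x *
            DD h (m + 1 - (k + 1)) v (x + (k + 1 : ℕ) * h))
        = (m.choose k : ℝ) * (DD h (k + 1) u x * DD h (m - k) v (x + (k + 1 : ℕ) * h))
          + (m.choose (k + 1) : ℝ) * (DD h (k + 1) u x *
            DD h (m + 1 - (k + 1)) v (x + (k + 1 : ℕ) * h)) := by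
      intro k hk
      rw [Nat.choose_succ_succ, Nat.add_sub_add_right]; push_cast; ring
    rw [Finset.sum_congr rfl e3, Finset.sum_add_distrib, add_assoc]
    congr 1
    have e4 : ∑ k ∈ Finset.range (m + 1 + 1), (m.choose k : ℝ) * (DD h k u x *
            DD h (m + 1 - k) v (x + k * h)) = ∑ k ∈ Finset.range (m + 1), (m.choose k : ℝ) *
            (DD h k u x * DD h (m + 1 - k) v (x + k * h)) := by
      rw [Finset.sum_range_succ]; simp
    rw [← e4, Finset.sum_range_succ']
    simp

lemma DD_sup (h : ℝ) (u : 𝓢(ℝ, ℝ)) (M : ℝ) (hu : ∀ x, |u x| ≤ M) (k : ℕ) :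
    ∀ x, |DD h k u x| ≤ 2 ^ k * M := by
  induction k with
  | zero => simpa [DD_zero] using hu
  | succ k ih =>
    intro x
    rw [DD_succ, pow_succ]
    have := abs_sub (DD h k u (x + h)) (DD h k u x)
    linarith [ih x, ih (x + h)]

lemma DD_sup1 (h : ℝ) (u : 𝓢(ℝ, ℝ)) (M : ℝ) (hu : ∀ x, |dd u x| ≤ M) (k : ℕ) (x : ℝ) :
    |DD h (k + 1) u x| ≤ 2 ^ k * (|h| * M) := by
  rw [DD_succ']
  apply DD_sup
  intro x
  rw [DD_succ, DD_zero]
  have := Convex.norm_image_sub_le_of_norm_hasDerivWithin_le (f := u) (f' := fun x => dd u x)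
    (s := Set.univ) (C := M) (x := x) (y := x + h)
    (fun y _ => (dd_hasDerivAt u y).hasDerivWithinAt) (fun y _ => hu y) convex_univ trivial trivial
  simp only [Real.norm_eq_abs, add_sub_cancel_left] at this
  linarith [mul_comm M |h|]

lemma int_mul (u v : 𝓢(ℝ, ℝ)) : Integrable (fun x => u x * v x) := by
  have := (pm u v).integrable (μ := volume)
  exact this.congr (Filter.Eventually.of_forall fun x => pm_apply u v x)

lemma int_sq (u : 𝓢(ℝ, ℝ)) : Integrable (fun x => u x ^ 2) := by
  simpa [pow_two] using int_mul u u

/-- The squared `L²` norm. -/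
def N2 (u : 𝓢(ℝ, ℝ)) : ℝ := ∫ x, u x ^ 2

lemma N2_nonneg (u : 𝓢(ℝ, ℝ)) : 0 ≤ N2 u := integral_nonneg fun x => sq_nonneg _

lemma N2_DD_one (h : ℝ) (u : 𝓢(ℝ, ℝ)) : N2 (DD h 1 u) ≤ 4 * N2 u := by
  have h1 : N2 (DD h 1 u) ≤ ∫ x, (2 * u (x + h) ^ 2 + 2 * u x ^ 2) := by
    apply integral_mono (int_sq _)
    · exact (((int_sq u).comp_add_right h).const_mul 2).add ((int_sq u).const_mul 2)
    · intro x
      simp only [DD_succ, DD_zero]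
      nlinarith [sq_nonneg (u (x + h) + u x)]
  rw [integral_add (((int_sq u).comp_add_right h).const_mul 2) ((int_sq u).const_mul 2),
    integral_const_mul, integral_const_mul,
    integral_add_right_eq_self (fun x => u x ^ 2) h] at h1
  unfold N2 at *
  linarith

lemma N2_DD (h : ℝ) (j k : ℕ) (u : 𝓢(ℝ, ℝ)) : N2 (DD h (k + j) u) ≤ 4 ^ j * N2 (DD h k u) := by
  induction j with
  | zero => simp
  | succ j ih =>
    rw [← add_assoc, DD_add h 1 (k + j)]
    refine (N2_DD_one _ _).trans ?_
    rw [pow_succ]; linarith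

lemma tri_bound (a b : 𝓢(ℝ, ℝ)) (φ : ℝ → ℝ) (K r c : ℝ) (hK : 0 ≤ K) (hr : 0 ≤ r)
    (hφ : ∀ x, |φ x| ≤ K * (r * |b (x + c)|)) :
    |∫ x, a x * φ x| ≤ K * (N2 a + r ^ 2 * N2 b) := by
  have hi : Integrable (fun x => K * (a x ^ 2 + r ^ 2 * b (x + c) ^ 2)) :=
    ((int_sq a).add (((int_sq b).comp_add_right c).const_mul _)).const_mul _
  have h1 : ‖∫ x, a x * φ x‖ ≤ ∫ x, K * (a x ^ 2 + r ^ 2 * b (x + c) ^ 2) := by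
    apply norm_integral_le_of_norm_le hi
    refine Filter.Eventually.of_forall fun x => ?_
    rw [Real.norm_eq_abs, abs_mul]
    have h2 : |a x| * |φ x| ≤ |a x| * (K * (r * |b (x + c)|)) :=
      mul_le_mul_of_nonneg_left (hφ x) (abs_nonneg _)
    have h3 : |a x| * (r * |b (x + c)|) ≤ a x ^ 2 + r ^ 2 * b (x + c) ^ 2 := by
      rw [← sq_abs (a x), ← sq_abs (b (x + c))]
      nlinarith [sq_nonneg (|a x| - r * |b (x + c)|), sq_nonneg (|a x|),
        sq_nonneg (r * |b (x + c)|)]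
    calc |a x| * |φ x| ≤ K * (|a x| * (r * |b (x + c)|)) := by linarith
      _ ≤ _ := mul_le_mul_of_nonneg_left h3 hK
  rw [integral_const_mul, integral_add (int_sq a) (((int_sq b).comp_add_right c).const_mul _),
    integral_const_mul, integral_add_right_eq_self (fun x => b x ^ 2) c] at h1
  exact h1

lemma zero_term (u v : 𝓢(ℝ, ℝ)) (M : ℝ) (hM : 0 ≤ M) (hu : ∀ x, |dd u x| ≤ M) :
    |∫ x, v x * (u x * dd v x)| ≤ M * N2 v := by
  have h1 := integral_mul_deriv_eq_neg_deriv_mul (pm u v) v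
  have h2 : ∀ x, deriv (pm u v) x = dd u x * v x + u x * dd v x := by
    intro x
    have : (⇑(pm u v) : ℝ → ℝ) = fun x => u x * v x := by ext x; exact pm_apply u v x
    rw [this]
    exact ((dd_hasDerivAt u x).mul (dd_hasDerivAt v x)).deriv
  simp only [h2, pm_apply] at h1
  have e1 : ∀ x, (dd u x * v x + u x * dd v x) * v x
      = dd u x * v x ^ 2 + v x * (u x * dd v x) := fun x => by ring
  have e2 : ∀ x, u x * v x * deriv (⇑v) x = v x * (u x * dd v x) := fun x => by
    rw [dd_apply]; ring
  have i1 : Integrable (fun x => dd u x * v x ^ 2) := by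
    refine (int_mul (dd u) (pm v v)).congr (Filter.Eventually.of_forall fun x => ?_)
    simp [pm_apply, pow_two]
  have i2 : Integrable (fun x => v x * (u x * dd v x)) := by
    refine (int_mul v (pm u (dd v))).congr (Filter.Eventually.of_forall fun x => ?_)
    simp [pm_apply]
  simp only [e1, e2] at h1
  rw [integral_add i1 i2] at h1
  have h3 : |∫ x, dd u x * v x ^ 2| ≤ M * N2 v := by
    rw [N2, ← integral_const_mul, ← Real.norm_eq_abs]
    apply norm_integral_le_of_norm_le ((int_sq v).const_mul M)
    refine Filter.Eventually.of_forall fun x => ?_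
    rw [Real.norm_eq_abs, abs_mul, abs_of_nonneg (sq_nonneg (v x))]
    exact mul_le_mul_of_nonneg_right (hu x) (sq_nonneg _)
  have h4 : ∫ x, v x * (u x * dd v x) = -(1 / 2) * ∫ x, dd u x * v x ^ 2 := by linarith
  rw [h4, abs_mul]
  have : |(-(1 / 2) : ℝ)| = 1 / 2 := by norm_num
  rw [this]
  linarith [abs_nonneg (∫ x, dd u x * v x ^ 2)]

lemma Ih_term (n : ℕ) (hn : 1 ≤ n) (k : ℕ) (hk : k ≤ 2 * n) (h : ℝ) (u : 𝓢(ℝ, ℝ)) (M : ℝ)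
    (hM : 0 ≤ M) (hu : ∀ x, |dd u x| ≤ M) :
    |∫ x, DD h (2 * n) u x * (DD h k u x * DD h (2 * n - k) (dd u) (x + k * h))|
      ≤ (2 ^ (2 * n) * (4 ^ (2 * n))) * M * (N2 (DD h n u) + h ^ 2 * N2 (DD h n (dd u))) := by
  set Q1 := N2 (DD h n u) with hQ1
  set Q2 := N2 (DD h n (dd u)) with hQ2
  have hQ1n : 0 ≤ Q1 := N2_nonneg _
  have hQ2n : 0 ≤ Q2 := N2_nonneg _
  have hhQ : 0 ≤ h ^ 2 * Q2 := mul_nonneg (sq_nonneg _) hQ2n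
  have A : ∀ j, n ≤ j → j ≤ 2 * n → ∀ w, N2 (DD h j w) ≤ 4 ^ n * N2 (DD h n w) := by
    intro j hj1 hj2 w
    obtain ⟨i, rfl⟩ := Nat.exists_eq_add_of_le hj1
    refine (N2_DD h i n w).trans (mul_le_mul_of_nonneg_right ?_ (N2_nonneg _))
    exact pow_le_pow_right₀ (by norm_num) (by omega)
  have hv : N2 (DD h (2 * n) u) ≤ 4 ^ n * Q1 := A _ (by omega) le_rfl u
  have h4n : (4 : ℝ) ^ (2 * n) = 4 ^ n * 4 ^ n := by rw [← pow_add]; congr 1; omega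
  have h41 : (1 : ℝ) ≤ 4 ^ n := one_le_pow₀ (by norm_num)
  have h21 : (1 : ℝ) ≤ 2 ^ (2 * n) := one_le_pow₀ (by norm_num)
  rcases Nat.lt_or_ge k n with hkn | hkn
  · rcases Nat.eq_zero_or_pos k with rfl | hk0
    · simp only [DD_zero, Nat.sub_zero, Nat.cast_zero, zero_mul, add_zero]
      rw [← dd_DD]
      refine (zero_term u _ M hM hu).trans ?_
      have : 4 ^ n * Q1 ≤ (2 ^ (2 * n) * (4 ^ (2 * n))) * (Q1 + h ^ 2 * Q2) := by
        apply mul_le_mul _ (by linarith) hQ1n (by positivity)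
        rw [h4n]
        nlinarith
      calc M * _ ≤ M * ((2 ^ (2 * n) * (4 ^ (2 * n))) * (Q1 + h ^ 2 * Q2)) :=
            mul_le_mul_of_nonneg_left (hv.trans this) hM
        _ = _ := by ring
    · obtain ⟨j, rfl⟩ : ∃ j, k = j + 1 := ⟨k - 1, by omega⟩
      have hφ : ∀ x, |DD h (j + 1) u x * DD h (2 * n - (j + 1)) (dd u) (x + (j + 1 : ℕ) * h)|
          ≤ (2 ^ j * M) * (|h| * |DD h (2 * n - (j + 1)) (dd u) (x + (j + 1 : ℕ) * h)|) := by
        intro x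
        rw [abs_mul]
        have := mul_le_mul_of_nonneg_right (DD_sup1 h u M hu j x)
          (abs_nonneg (DD h (2 * n - (j + 1)) (dd u) (x + (j + 1 : ℕ) * h)))
        linarith
      refine (tri_bound (DD h (2 * n) u) (DD h (2 * n - (j + 1)) (dd u)) _ (2 ^ j * M) |h| _
        (by positivity) (abs_nonneg h) hφ).trans ?_
      rw [sq_abs]
      have hb := A (2 * n - (j + 1)) (by omega) (by omega) (dd u)
      have h2j : (2 : ℝ) ^ j ≤ 2 ^ (2 * n) := pow_le_pow_right₀ (by norm_num) (by omega)
      have hS : N2 (DD h (2 * n) u) + h ^ 2 * N2 (DD h (2 * n - (j + 1)) (dd u))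
          ≤ 4 ^ (2 * n) * (Q1 + h ^ 2 * Q2) := by
        have := mul_le_mul_of_nonneg_left hb (sq_nonneg h)
        have h5 : (4 : ℝ) ^ n ≤ 4 ^ (2 * n) := pow_le_pow_right₀ (by norm_num) (by omega)
        have := mul_le_mul_of_nonneg_right h5 (add_nonneg hQ1n hhQ)
        linarith
      calc _ ≤ (2 ^ (2 * n) * M) * (4 ^ (2 * n) * (Q1 + h ^ 2 * Q2)) := by
            gcongr
            exact add_nonneg (N2_nonneg _) (mul_nonneg (sq_nonneg _) (N2_nonneg _))
        _ = _ := by ring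
  · have hφ : ∀ x, |DD h k u x * DD h (2 * n - k) (dd u) (x + k * h)|
        ≤ (2 ^ (2 * n - k) * M) * (1 * |DD h k u (x + 0)|) := by
      intro x
      rw [abs_mul, one_mul, add_zero, mul_comm]
      exact mul_le_mul_of_nonneg_right (DD_sup h (dd u) M hu _ _) (abs_nonneg _)
    refine (tri_bound (DD h (2 * n) u) (DD h k u) _ (2 ^ (2 * n - k) * M) 1 0
        (by positivity) zero_le_one hφ).trans ?_
    have hb := A k hkn hk u
    have h2j : (2 : ℝ) ^ (2 * n - k) * 2 ≤ 2 ^ (2 * n) ∨ n = 0 := by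
      rcases Nat.eq_zero_or_pos n with h0 | h0
      · exact Or.inr h0
      · left
        rw [← pow_succ]
        exact pow_le_pow_right₀ (by norm_num) (by omega)
    rcases h2j with h2j | rfl
    · have hS : N2 (DD h (2 * n) u) + 1 ^ 2 * N2 (DD h k u)
          ≤ 2 * (4 ^ (2 * n) * (Q1 + h ^ 2 * Q2)) := by
        have h5 : (4 : ℝ) ^ n ≤ 4 ^ (2 * n) := pow_le_pow_right₀ (by norm_num) (by omega)
        have h6 := mul_le_mul_of_nonneg_right h5 hQ1n
        have h7 : 0 ≤ 4 ^ (2 * n) * (h ^ 2 * Q2) := by positivity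
        rw [one_pow, one_mul, mul_add]
        linarith
      calc _ ≤ (2 ^ (2 * n - k) * M) * (2 * (4 ^ (2 * n) * (Q1 + h ^ 2 * Q2))) := by
            gcongr
        _ = (2 ^ (2 * n - k) * 2) * (M * (4 ^ (2 * n) * (Q1 + h ^ 2 * Q2))) := by ring
        _ ≤ 2 ^ (2 * n) * (M * (4 ^ (2 * n) * (Q1 + h ^ 2 * Q2))) := by
            gcongr
        _ = _ := by ring
    · omega

lemma Ih_bound (n : ℕ) (hn : 1 ≤ n) : ∃ C : ℝ, 0 ≤ C ∧ ∀ (h : ℝ) (u : 𝓢(ℝ, ℝ)) (M : ℝ),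
    0 ≤ M → (∀ x, |dd u x| ≤ M) →
    |∫ x, DD h (2 * n) u x * DD h (2 * n) (pm u (dd u)) x|
      ≤ C * M * (N2 (DD h n u) + h ^ 2 * N2 (DD h n (dd u))) := by
  refine ⟨∑ k ∈ Finset.range (2 * n + 1), ((2 * n).choose k : ℝ) * (2 ^ (2 * n) * (4 ^ (2 * n))),
    by positivity, ?_⟩
  intro h u M hM hu
  have e : ∀ x, DD h (2 * n) u x * DD h (2 * n) (pm u (dd u)) x
      = ∑ k ∈ Finset.range (2 * n + 1), ((2 * n).choose k : ℝ) *
        (DD h (2 * n) u x * (DD h k u x * DD h (2 * n - k) (dd u) (x + k * h))) := by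
    intro x
    rw [leibniz, Finset.mul_sum]
    exact Finset.sum_congr rfl fun k _ => by ring
  simp only [e]
  rw [integral_finsetSum]
  · rw [Finset.sum_mul, Finset.sum_mul]
    refine (Finset.abs_sum_le_sum_abs _ _).trans (Finset.sum_le_sum fun k hk => ?_)
    rw [integral_const_mul, abs_mul, abs_of_nonneg (Nat.cast_nonneg _)]
    have := Ih_term n hn k (by have := Finset.mem_range.1 hk; omega) h u M hM hu
    have := mul_le_mul_of_nonneg_left this (Nat.cast_nonneg (α := ℝ) ((2 * n).choose k))
    linarith
  · intro k _
    apply Integrable.const_mul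
    refine (int_mul (DD h (2 * n) u) (pm (DD h k u)
      (compSubConstCLM ℝ (-(k * h)) (DD h (2 * n - k) (dd u))))).congr
      (Filter.Eventually.of_forall fun x => ?_)
    simp [pm_apply]

/-- Fourier transform of the complexification. -/
def hat (u : 𝓢(ℝ, ℝ)) : 𝓢(ℝ, ℂ) := 𝓕 (cS u)

lemma hat_apply (u : 𝓢(ℝ, ℝ)) (ξ : ℝ) : hat u ξ = 𝓕 (cc ⇑u) ξ := rfl

/-- The real part of `conj û v̂`. -/
def PP (u v : 𝓢(ℝ, ℝ)) (ξ : ℝ) : ℝ := ((starRingEnd ℂ) (hat u ξ) * hat v ξ).re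

/-- `|e^{2πiy} - 1|²`. -/
def th (y : ℝ) : ℝ := 2 - 2 * Real.cos (2 * Real.pi * y)

lemma hat_dd (u : 𝓢(ℝ, ℝ)) (ξ : ℝ) : hat (dd u) ξ = (2 * Real.pi * Complex.I * ξ) * hat u ξ := by
  have h0 : (cc ⇑(dd u) : ℝ → ℂ) = deriv (⇑(cS u)) := by
    ext x
    have := (dd_hasDerivAt u x).ofReal_comp
    exact this.deriv.symm
  have h1 := Real.fourier_deriv (f := ⇑(cS u)) (cS u).integrable
    ((cS u).smooth 1).differentiable_one
    (by rw [← h0]; exact (cS (dd u)).integrable)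
  rw [hat_apply, h0, h1]
  rfl

lemma hat_DD_one (h : ℝ) (u : 𝓢(ℝ, ℝ)) (ξ : ℝ) :
    hat (DD h 1 u) ξ = (Complex.exp (2 * Real.pi * Complex.I * (h * ξ)) - 1) * hat u ξ := by
  simp only [hat_apply]
  rw [Real.fourier_real_eq, Real.fourier_real_eq]
  have e : ∀ v, Real.fourierChar (-(v * ξ)) • cc (⇑(DD h 1 u)) v =
      Complex.exp (2 * Real.pi * Complex.I * (h * ξ)) *
        (Real.fourierChar (-((v + h) * ξ)) • cc (⇑u) (v + h))
      - Real.fourierChar (-(v * ξ)) • cc (⇑u) v := by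
    intro v
    simp only [Circle.smul_def, Real.fourierChar_apply, smul_eq_mul, cc, DD_succ, DD_zero]
    rw [← mul_assoc, ← Complex.exp_add]
    have : (2 * Real.pi * Complex.I * (h * ξ) + ((2 * Real.pi * (-((v + h) * ξ)) : ℝ) : ℂ)
      * Complex.I) = ((2 * Real.pi * (-(v * ξ)) : ℝ) : ℂ) * Complex.I := by
      push_cast; ring
    rw [this]; push_cast; ring
  have hi : Integrable (fun v => Real.fourierChar (-(v * ξ)) • cc (⇑u) v) := by
    have := (Real.fourierIntegral_convergent_iff (μ := volume) (f := cc ⇑u) ξ).2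
      ((cS u).integrable)
    simpa [mul_comm] using this
  simp only [e]
  rw [integral_sub ((hi.comp_add_right h).const_mul _) hi, integral_const_mul,
    integral_add_right_eq_self (fun v => Real.fourierChar (-(v * ξ)) • cc (⇑u) v) h]
  ring

lemma hat_DD (h : ℝ) (k : ℕ) (u : 𝓢(ℝ, ℝ)) (ξ : ℝ) :
    hat (DD h k u) ξ = (Complex.exp (2 * Real.pi * Complex.I * (h * ξ)) - 1) ^ k * hat u ξ := by
  induction k with
  | zero => simp [DD_zero]
  | succ k ih => rw [DD_add h 1 k, hat_DD_one, ih]; ring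

lemma normSq_e (y : ℝ) :
    Complex.normSq (Complex.exp (2 * Real.pi * Complex.I * y) - 1) = th y := by
  have : (2 * Real.pi * Complex.I * y : ℂ) = ((2 * Real.pi * y : ℝ) : ℂ) * Complex.I := by
    push_cast; ring
  rw [this, Complex.normSq_apply]
  simp only [Complex.sub_re, Complex.sub_im, Complex.exp_ofReal_mul_I_re,
    Complex.exp_ofReal_mul_I_im, Complex.one_re, Complex.one_im, th]
  nlinarith [Real.sin_sq_add_cos_sq (2 * Real.pi * y)]

lemma th_nonneg (y : ℝ) : 0 ≤ th y := by
  unfold th; linarith [Real.cos_le_one (2 * Real.pi * y)]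

lemma th_le_four (y : ℝ) : th y ≤ 4 := by
  unfold th; linarith [Real.neg_one_le_cos (2 * Real.pi * y)]

lemma th_le_sq (y : ℝ) : th y ≤ (2 * Real.pi) ^ 2 * y ^ 2 := by
  unfold th
  have := Real.one_sub_sq_div_two_le_cos (x := 2 * Real.pi * y)
  nlinarith

lemma th_cont : Continuous th := by unfold th; fun_prop

lemma PP_DD (h : ℝ) (k : ℕ) (u v : 𝓢(ℝ, ℝ)) (ξ : ℝ) :
    PP (DD h k u) (DD h k v) ξ = th (h * ξ) ^ k * PP u v ξ := by
  unfold PP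
  rw [hat_DD, hat_DD]
  have e := normSq_e (h * ξ)
  push_cast at e
  set z := (Complex.exp (2 * Real.pi * Complex.I * (h * ξ)) - 1)
  have : (starRingEnd ℂ) (z ^ k * hat u ξ) * (z ^ k * hat v ξ)
      = ((th (h * ξ) ^ k : ℝ) : ℂ) * ((starRingEnd ℂ) (hat u ξ) * hat v ξ) := by
    rw [← e, map_mul, map_pow, Complex.ofReal_pow, Complex.normSq_eq_conj_mul_self, mul_pow]
    ring
  rw [this, Complex.re_ofReal_mul]

lemma norm_hat_DD (h : ℝ) (k : ℕ) (u : 𝓢(ℝ, ℝ)) (ξ : ℝ) :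
    ‖hat (DD h k u) ξ‖ ^ 2 = th (h * ξ) ^ k * ‖hat u ξ‖ ^ 2 := by
  have e := normSq_e (h * ξ)
  push_cast at e
  rw [hat_DD, norm_mul, norm_pow, ← e, Complex.normSq_eq_norm_sq]
  ring

lemma norm_hat_dd (u : 𝓢(ℝ, ℝ)) (ξ : ℝ) :
    ‖hat (dd u) ξ‖ ^ 2 = (2 * Real.pi) ^ 2 * ξ ^ 2 * ‖hat u ξ‖ ^ 2 := by
  rw [hat_dd]
  simp [mul_pow, abs_of_pos Real.pi_pos]

lemma N2_hat (u : 𝓢(ℝ, ℝ)) : N2 u = ∫ ξ, ‖hat u ξ‖ ^ 2 := by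
  rw [hat, integral_norm_sq_fourier]
  simp [cS_apply, N2]

lemma hat_sq_int (u : 𝓢(ℝ, ℝ)) : Integrable (fun ξ => ‖hat u ξ‖ ^ 2) :=
  ((hat u).memLp 2).integrable_norm_pow (by norm_num)

lemma PP_abs_le (u v : 𝓢(ℝ, ℝ)) (ξ : ℝ) : |PP u v ξ| ≤ ‖hat u ξ‖ * ‖hat v ξ‖ := by
  refine (Complex.abs_re_le_norm _).trans ?_
  simp

lemma PP_cont (u v : 𝓢(ℝ, ℝ)) : Continuous (PP u v) := by
  unfold PP
  have := (hat u).continuous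
  have := (hat v).continuous
  fun_prop

lemma PP_int (u v : 𝓢(ℝ, ℝ)) : Integrable (PP u v) := by
  refine ((hat_sq_int u).add (hat_sq_int v)).mono' (PP_cont u v).aestronglyMeasurable
    (Filter.Eventually.of_forall fun ξ => ?_)
  rw [Real.norm_eq_abs]
  refine (PP_abs_le u v ξ).trans ?_
  simp only [Pi.add_apply]
  nlinarith [sq_nonneg (‖hat u ξ‖ - ‖hat v ξ‖), sq_nonneg ‖hat u ξ‖, sq_nonneg ‖hat v ξ‖]

lemma plancherel (u v : 𝓢(ℝ, ℝ)) : ∫ x, u x * v x = ∫ ξ, PP u v ξ := by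
  have h1 := integral_inner_fourier_fourier (cS u) (cS v)
  have h2 : ∫ ξ, inner ℂ (𝓕 (cS u) ξ) (𝓕 (cS v) ξ)
      = ∫ ξ, (starRingEnd ℂ) (hat u ξ) * hat v ξ := by
    refine integral_congr_ae (Filter.Eventually.of_forall fun ξ => ?_)
    simp [hat, RCLike.inner_apply, mul_comm]
  have h3 : ∫ x, inner ℂ (cS u x) (cS v x) = ((∫ x, u x * v x : ℝ) : ℂ) := by
    rw [← integral_complex_ofReal]
    refine integral_congr_ae (Filter.Eventually.of_forall fun x => ?_)
    simp [cS_apply, RCLike.inner_apply, mul_comm]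
  rw [h2, h3] at h1
  have h4 : Integrable (fun ξ => (starRingEnd ℂ) (hat u ξ) * hat v ξ) := by
    have c1 := (hat u).continuous
    have c2 := (hat v).continuous
    refine ((hat_sq_int u).add (hat_sq_int v)).mono' (by fun_prop)
      (Filter.Eventually.of_forall fun ξ => ?_)
    simp only [Pi.add_apply, norm_mul, RCLike.norm_conj]
    nlinarith [sq_nonneg (‖hat u ξ‖ - ‖hat v ξ‖), sq_nonneg ‖hat u ξ‖, sq_nonneg ‖hat v ξ‖]
  have h5 := congrArg Complex.re h1
  rw [Complex.ofReal_re] at h5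
  rw [← h5]
  exact (integral_re h4).symm

/-- The physical-space estimate for a fixed increment, on the Fourier side. -/
lemma K1 (n : ℕ) (hn : 1 ≤ n) : ∃ C : ℝ, 0 ≤ C ∧ ∀ (h : ℝ) (u : 𝓢(ℝ, ℝ)) (M : ℝ),
    0 ≤ M → (∀ x, |dd u x| ≤ M) →
    |∫ ξ, th (h * ξ) ^ (2 * n) * PP u (pm u (dd u)) ξ|
      ≤ C * M * ∫ ξ, th (h * ξ) ^ n * (1 + (h * ξ) ^ 2) * ‖hat u ξ‖ ^ 2 := by
  obtain ⟨C, hC, H⟩ := Ih_bound n hn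
  refine ⟨C * (2 * Real.pi) ^ 2, by positivity, fun h u M hM hu => ?_⟩
  have h1 := H h u M hM hu
  rw [plancherel, N2_hat, N2_hat] at h1
  simp only [PP_DD, norm_hat_DD, norm_hat_dd] at h1
  refine h1.trans ?_
  rw [mul_assoc, mul_assoc, mul_assoc]
  refine mul_le_mul_of_nonneg_left ?_ hC
  rw [mul_left_comm]
  refine mul_le_mul_of_nonneg_left ?_ hM
  have i1 : Integrable (fun ξ => th (h * ξ) ^ n * ‖hat u ξ‖ ^ 2) := by
    simpa only [norm_hat_DD] using hat_sq_int (DD h n u)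
  have i2 : Integrable (fun ξ => th (h * ξ) ^ n * ((2 * Real.pi) ^ 2 * ξ ^ 2 * ‖hat u ξ‖ ^ 2)) := by
    simpa only [norm_hat_DD, norm_hat_dd] using hat_sq_int (DD h n (dd u))
  have i3 : Integrable (fun ξ => th (h * ξ) ^ n * (1 + (h * ξ) ^ 2) * ‖hat u ξ‖ ^ 2) := by
    refine (i1.add (i2.const_mul (h ^ 2 / (2 * Real.pi) ^ 2))).congr
      (Filter.Eventually.of_forall fun ξ => ?_)
    have := Real.pi_pos
    simp only [Pi.add_apply]
    field_simp
  rw [← integral_const_mul, ← integral_add i1 (i2.const_mul _), ← integral_const_mul]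
  refine integral_mono (i1.add (i2.const_mul _)) (i3.const_mul _) fun ξ => ?_
  have hp : (1 : ℝ) ≤ (2 * Real.pi) ^ 2 := by nlinarith [Real.pi_gt_three]
  have h6 : 0 ≤ th (h * ξ) ^ n * ‖hat u ξ‖ ^ 2 := by
    have := th_nonneg (h * ξ); positivity
  simp only [Pi.add_apply]
  nlinarith

lemma th_even (y : ℝ) : th (-y) = th y := by
  unfold th; rw [mul_neg, Real.cos_neg]

lemma th_mul_abs (h ξ : ℝ) : th (h * |ξ|) = th (h * ξ) := by
  rcases abs_choice ξ with e | e <;> rw [e]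
  rw [mul_neg, th_even]

lemma scale_int (F : ℝ → ℝ) (σ b : ℝ) (hb : 0 < b) :
    ∫ h in Set.Ioi (0 : ℝ), h ^ (-1 - 2 * σ) * F (h * b)
      = b ^ (2 * σ) * ∫ y in Set.Ioi (0 : ℝ), y ^ (-1 - 2 * σ) * F y := by
  have h1 := integral_comp_mul_right_Ioi (fun y => y ^ (-1 - 2 * σ) * F y) 0 hb
  simp only [zero_mul, smul_eq_mul] at h1
  have h2 : ∫ h in Set.Ioi (0 : ℝ), (h * b) ^ (-1 - 2 * σ) * F (h * b)
      = b ^ (-1 - 2 * σ) * ∫ h in Set.Ioi (0 : ℝ), h ^ (-1 - 2 * σ) * F (h * b) := by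
    rw [← integral_const_mul]
    refine setIntegral_congr_fun measurableSet_Ioi fun h hh => ?_
    rw [Real.mul_rpow (le_of_lt hh) hb.le]; ring
  rw [h2] at h1
  have h3 : b ^ (2 * σ) * b * b ^ (-1 - 2 * σ) = 1 := by
    nth_rewrite 2 [← Real.rpow_one b]
    rw [← Real.rpow_add hb, ← Real.rpow_add hb]
    have : 2 * σ + 1 + (-1 - 2 * σ) = 0 := by ring
    rw [this, Real.rpow_zero]
  calc _ = (b ^ (2 * σ) * b * b ^ (-1 - 2 * σ)) *
        ∫ h in Set.Ioi (0 : ℝ), h ^ (-1 - 2 * σ) * F (h * b) := by rw [h3, one_mul]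
    _ = b ^ (2 * σ) * b * (b⁻¹ * ∫ y in Set.Ioi (0 : ℝ), y ^ (-1 - 2 * σ) * F y) := by
        rw [← h1]; ring
    _ = _ := by field_simp

lemma kernel_int (F : ℝ → ℝ) (hF : Continuous F) (σ C q : ℝ) (p : ℕ) (hp : σ < p)
    (hq : q < 2 * σ) (h0 : ∀ y, 0 ≤ F y) (h1 : ∀ y ∈ Set.Ioc (0 : ℝ) 1, F y ≤ C * y ^ (2 * p))
    (h2 : ∀ y ∈ Set.Ioi (1 : ℝ), F y ≤ C * y ^ q) :
    IntegrableOn (fun y => y ^ (-1 - 2 * σ) * F y) (Set.Ioi 0) := by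
  rw [← Set.Ioc_union_Ioi_eq_Ioi (zero_le_one (α := ℝ))]
  have cont : ContinuousOn (fun y => y ^ (-1 - 2 * σ) * F y) (Set.Ioi 0) := by
    refine ContinuousOn.mul ?_ hF.continuousOn
    exact fun y hy => (Real.continuousAt_rpow_const y _ (Or.inl (ne_of_gt hy))).continuousWithinAt
  refine IntegrableOn.union ?_ ?_
  · have hi : IntegrableOn (fun y : ℝ => C * y ^ (2 * p - 1 - 2 * σ)) (Set.Ioc 0 1) := by
      have := (intervalIntegral.intervalIntegrable_rpow' (a := 0) (b := 1)
        (r := 2 * p - 1 - 2 * σ) (by linarith))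
      rw [intervalIntegrable_iff_integrableOn_Ioc_of_le zero_le_one] at this
      exact this.const_mul C
    refine hi.mono' ((cont.mono Set.Ioc_subset_Ioi_self).aestronglyMeasurable measurableSet_Ioc) ?_
    refine (ae_restrict_mem measurableSet_Ioc).mono fun y hy => ?_
    have hy0 : 0 < y := hy.1
    rw [Real.norm_eq_abs, abs_of_nonneg (mul_nonneg (by positivity) (h0 y))]
    have e : (2 * p - 1 - 2 * σ : ℝ) = (-1 - 2 * σ) + ((2 * p : ℕ) : ℝ) := by push_cast; ring
    rw [e, Real.rpow_add hy0, Real.rpow_natCast]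
    have := mul_le_mul_of_nonneg_left (h1 y hy) (Real.rpow_nonneg hy0.le (-1 - 2 * σ))
    linarith
  · have hi : IntegrableOn (fun y : ℝ => C * y ^ (q - 1 - 2 * σ)) (Set.Ioi 1) :=
      (integrableOn_Ioi_rpow_of_lt (by linarith) one_pos).const_mul C
    refine hi.mono' ((cont.mono (Set.Ioi_subset_Ioi zero_le_one)).aestronglyMeasurable
      measurableSet_Ioi) ?_
    refine (ae_restrict_mem measurableSet_Ioi).mono fun y hy => ?_
    have hy0 : 0 < y := lt_trans one_pos hy
    rw [Real.norm_eq_abs, abs_of_nonneg (mul_nonneg (by positivity) (h0 y))]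
    have e : (q - 1 - 2 * σ : ℝ) = (-1 - 2 * σ) + q := by ring
    rw [e, Real.rpow_add hy0]
    have := mul_le_mul_of_nonneg_left (h2 y hy) (Real.rpow_nonneg hy0.le (-1 - 2 * σ))
    linarith

lemma th_pow_le (p : ℕ) (y : ℝ) : th y ^ p ≤ ((2 * Real.pi) ^ 2) ^ p * y ^ (2 * p) := by
  rw [pow_mul y, ← mul_pow]
  exact pow_le_pow_left₀ (th_nonneg y) (th_le_sq y) p

lemma four_le : (4 : ℝ) ≤ (2 * Real.pi) ^ 2 := by nlinarith [Real.pi_gt_three]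

lemma th_pow_le' (p : ℕ) (y : ℝ) : th y ^ p ≤ ((2 * Real.pi) ^ 2) ^ p :=
  pow_le_pow_left₀ (th_nonneg y) ((th_le_four y).trans four_le) p

lemma kerA_int (σ : ℝ) (p : ℕ) (h0 : 0 < σ) (hp : σ < p) :
    IntegrableOn (fun y => y ^ (-1 - 2 * σ) * th y ^ p) (Set.Ioi 0) := by
  refine kernel_int (fun y => th y ^ p) (th_cont.pow p) σ (((2 * Real.pi) ^ 2) ^ p) 0 p hp
    (by linarith) (fun y => pow_nonneg (th_nonneg y) p) (fun y _ => th_pow_le p y) fun y _ => ?_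
  rw [Real.rpow_zero, mul_one]
  exact th_pow_le' p y

lemma kerB_int (s : ℝ) (n : ℕ) (h0 : 1 < s) (hn : s < n) :
    IntegrableOn (fun y => y ^ (-1 - 2 * s) * (th y ^ n * (1 + y ^ 2))) (Set.Ioi 0) := by
  refine kernel_int (fun y => th y ^ n * (1 + y ^ 2)) (by have := th_cont; fun_prop) s
    (2 * ((2 * Real.pi) ^ 2) ^ n) 2 n hn
    (by linarith) (fun y => mul_nonneg (pow_nonneg (th_nonneg y) n) (by positivity)) ?_ ?_
  · intro y hy
    have h1 : 1 + y ^ 2 ≤ 2 := by nlinarith [hy.1, hy.2]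
    have := mul_le_mul (th_pow_le n y) h1 (by positivity)
      (mul_nonneg (by positivity) (pow_nonneg hy.1.le _))
    linarith
  · intro y hy
    have hy : 1 < y := hy
    have h1 : 1 + y ^ 2 ≤ 2 * y ^ 2 := by nlinarith
    have := mul_le_mul (th_pow_le' n y) h1 (by positivity) (by positivity)
    rw [show (2 : ℝ) = ((2 : ℕ) : ℝ) by norm_num, Real.rpow_natCast]
    push_cast
    linarith

lemma abs_rpow_two (ξ σ : ℝ) : |ξ| ^ (2 * σ) = (ξ ^ 2) ^ σ := by
  rw [Real.rpow_mul (abs_nonneg _)]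
  congr 1
  rw [show (2 : ℝ) = ((2 : ℕ) : ℝ) by norm_num, Real.rpow_natCast, sq_abs]

lemma kerA_pos (σ : ℝ) (p : ℕ) (h0 : 0 < σ) (hp : σ < p) :
    0 < ∫ y in Set.Ioi (0 : ℝ), y ^ (-1 - 2 * σ) * th y ^ p := by
  rw [setIntegral_pos_iff_support_of_nonneg_ae _ (kerA_int σ p h0 hp)]
  · refine lt_of_lt_of_le ?_ (measure_mono (μ := volume) (s := Set.Ioo (0 : ℝ) 1) ?_)
    · simp
    · intro y hy
      refine ⟨?_, hy.1⟩
      rw [Function.mem_support]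
      have h1 : 0 < th y := by
        refine lt_of_le_of_ne (th_nonneg y) fun h => ?_
        unfold th at h
        have h2 : Real.cos (2 * Real.pi * y) = 1 := by linarith
        have hpi := Real.pi_pos
        have h3 := hy.1
        have h4 := hy.2
        rw [Real.cos_eq_one_iff_of_lt_of_lt (by nlinarith) (by nlinarith)] at h2
        have : 0 < 2 * Real.pi * y := by positivity
        linarith
      have := Real.rpow_pos_of_pos hy.1 (-1 - 2 * σ)
      positivity
  · refine (ae_restrict_mem measurableSet_Ioi).mono fun y hy => ?_
    exact mul_nonneg (Real.rpow_nonneg (le_of_lt hy) _) (pow_nonneg (th_nonneg y) p)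

lemma th_zero : th 0 = 0 := by simp [th]

/-- Integrability of the kernel at frequency `ξ`. -/
lemma kerA_int' (σ : ℝ) (p : ℕ) (h0 : 0 < σ) (hp : σ < p) (ξ : ℝ) :
    IntegrableOn (fun h => h ^ (-1 - 2 * σ) * th (h * ξ) ^ p) (Set.Ioi 0) := by
  refine kernel_int (fun y => th (y * ξ) ^ p) (by have := th_cont; fun_prop) σ
    (((2 * Real.pi) ^ 2) ^ p * (1 + ξ ^ (2 * p))) 0 p hp
    (by linarith) (fun y => pow_nonneg (th_nonneg _) p) (fun y hy => ?_) fun y _ => ?_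
  · refine (th_pow_le p _).trans ?_
    rw [mul_pow y ξ]
    have h1 : 0 ≤ ((2 * Real.pi) ^ 2) ^ p * y ^ (2 * p) :=
      mul_nonneg (by positivity) (pow_nonneg hy.1.le _)
    nlinarith
  · rw [Real.rpow_zero, mul_one]
    refine (th_pow_le' p _).trans ?_
    have h1 : 0 ≤ ((2 * Real.pi) ^ 2) ^ p := by positivity
    have h2 : 0 ≤ ξ ^ (2 * p) := by rw [pow_mul]; positivity
    nlinarith

lemma W2 (σ : ℝ) (p : ℕ) (h0 : 0 < σ) (hp : σ < p) (ξ : ℝ) :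
    ∫ h in Set.Ioi (0 : ℝ), h ^ (-1 - 2 * σ) * th (h * ξ) ^ p
      = (∫ y in Set.Ioi (0 : ℝ), y ^ (-1 - 2 * σ) * th y ^ p) * (ξ ^ 2) ^ σ := by
  rcases eq_or_ne ξ 0 with rfl | hξ
  · have hp0 : p ≠ 0 := by
      rintro rfl
      simp at hp; linarith
    simp [th_zero, hp0, Real.zero_rpow h0.ne']
  · have := scale_int (fun y => th y ^ p) σ |ξ| (abs_pos.2 hξ)
    simp only [th_mul_abs] at this
    rw [this, abs_rpow_two, mul_comm]

lemma W1 (s : ℝ) (n : ℕ) (h0 : 1 < s) (hn : s < n) : ∃ C : ℝ, 0 ≤ C ∧ ∀ ξ : ℝ,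
    ∫ h in Set.Ioc (0 : ℝ) 1, h ^ (-1 - 2 * s) * (th (h * ξ) ^ n * (1 + (h * ξ) ^ 2))
      ≤ C * (ξ ^ 2) ^ s := by
  have nn : ∀ (h ξ : ℝ), 0 < h → 0 ≤ h ^ (-1 - 2 * s) * (th (h * ξ) ^ n * (1 + (h * ξ) ^ 2)) := by
    intro h ξ hh
    have := th_nonneg (h * ξ)
    positivity
  refine ⟨∫ y in Set.Ioi (0 : ℝ), y ^ (-1 - 2 * s) * (th y ^ n * (1 + y ^ 2)), ?_, fun ξ => ?_⟩
  · refine setIntegral_nonneg measurableSet_Ioi fun y hy => ?_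
    simpa using nn y 1 hy
  rcases eq_or_ne ξ 0 with rfl | hξ
  · have hp0 : n ≠ 0 := by
      rintro rfl
      simp at hn; linarith
    simp [th_zero, hp0, Real.zero_rpow (show s ≠ 0 by linarith)]
  · have := scale_int (fun y => th y ^ n * (1 + y ^ 2)) s |ξ| (abs_pos.2 hξ)
    simp only [th_mul_abs] at this
    have e : ∀ h : ℝ, (h * |ξ|) ^ 2 = (h * ξ) ^ 2 := fun h => by rw [mul_pow, sq_abs, mul_pow]
    simp only [e] at this
    rw [abs_rpow_two] at this
    refine le_of_le_of_eq ?_ (this.trans (mul_comm _ _))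
    refine setIntegral_mono_set ?_ ?_ (Set.Ioc_subset_Ioi_self.eventuallyLE)
    · have h1 := (integrableOn_Ioi_comp_mul_right_iff
        (fun y => y ^ (-1 - 2 * s) * (th y ^ n * (1 + y ^ 2))) 0 (abs_pos.2 hξ)).2
        (by rw [zero_mul]; exact kerB_int s n h0 hn)
      refine IntegrableOn.congr_fun (h1.const_mul ((|ξ| ^ (-1 - 2 * s))⁻¹)) ?_ measurableSet_Ioi
      intro h hh
      have hx := Real.rpow_pos_of_pos (abs_pos.2 hξ) (-1 - 2 * s)
      simp only [th_mul_abs, e]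
      rw [Real.mul_rpow (le_of_lt hh) (abs_nonneg _)]
      field_simp
    · exact (ae_restrict_mem measurableSet_Ioi).mono fun y hy => nn y ξ hy

lemma tail_bound (σ : ℝ) (p : ℕ) (h0 : 0 < σ) (hp : σ < p) : ∃ C : ℝ, 0 ≤ C ∧ ∀ ξ : ℝ,
    |∫ h in Set.Ioi (1 : ℝ), h ^ (-1 - 2 * σ) * th (h * ξ) ^ p| ≤ C := by
  have hi : IntegrableOn (fun y : ℝ => ((2 * Real.pi) ^ 2) ^ p * y ^ (-1 - 2 * σ)) (Set.Ioi 1) :=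
    (integrableOn_Ioi_rpow_of_lt (by linarith) one_pos).const_mul _
  refine ⟨∫ h in Set.Ioi (1 : ℝ), ((2 * Real.pi) ^ 2) ^ p * h ^ (-1 - 2 * σ), ?_, fun ξ => ?_⟩
  · refine setIntegral_nonneg measurableSet_Ioi fun y hy => ?_
    have : (0 : ℝ) < y := lt_trans one_pos hy
    positivity
  · rw [← Real.norm_eq_abs]
    refine norm_integral_le_of_norm_le hi ?_
    refine (ae_restrict_mem measurableSet_Ioi).mono fun y hy => ?_
    have hy0 : (0 : ℝ) < y := lt_trans one_pos hy
    rw [Real.norm_eq_abs, abs_of_nonneg (mul_nonneg (by positivity) (pow_nonneg (th_nonneg _) p)),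
      mul_comm]
    exact mul_le_mul_of_nonneg_right (th_pow_le' p _) (by positivity)

lemma taylor_weight (s : ℝ) (hs : 0 < s) : ∃ (S : Finset ℕ) (c : ℕ → ℝ) (C : ℝ),
    (∀ j ∈ S, (j : ℝ) < s) ∧ 0 ≤ C ∧ ∀ y : ℝ, 0 ≤ y →
      |(1 + y) ^ s - ∑ j ∈ S, c j * y ^ (s - j)| ≤ C := by
  obtain ⟨n, hn⟩ := exists_nat_gt s
  obtain ⟨C0, hC0⟩ := exists_taylor_mean_remainder_bound (f := fun z : ℝ => (1 + z) ^ s)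
    (a := 0) (b := 1) (n := n) zero_le_one (by
      intro z hz
      have h1 : (1 + z) ≠ 0 := by linarith [hz.1]
      exact ((contDiffAt_const.add contDiffAt_id).rpow_const_of_ne h1).contDiffWithinAt)
  set c : ℕ → ℝ := fun k => ((k.factorial : ℝ)⁻¹ *
    iteratedDerivWithin k (fun z : ℝ => (1 + z) ^ s) (Set.Icc 0 1) 0) with hc
  have hT : ∀ z ∈ Set.Icc (0 : ℝ) 1,
      |(1 + z) ^ s - ∑ k ∈ Finset.range (n + 1), c k * z ^ k| ≤ |C0| * z ^ (n + 1) := by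
    intro z hz
    have h1 := hC0 z hz
    rw [taylor_within_apply, Real.norm_eq_abs] at h1
    simp only [sub_zero, smul_eq_mul] at h1
    have e : ∑ k ∈ Finset.range (n + 1), c k * z ^ k = ∑ k ∈ Finset.range (n + 1),
        (k.factorial : ℝ)⁻¹ * z ^ k *
          iteratedDerivWithin k (fun z : ℝ => (1 + z) ^ s) (Set.Icc 0 1) 0 :=
      Finset.sum_congr rfl fun k _ => by rw [hc]; ring
    rw [e]
    exact h1.trans (mul_le_mul_of_nonneg_right (le_abs_self _) (pow_nonneg hz.1 _))
  classical
  set S := (Finset.range (n + 1)).filter (fun j : ℕ => (j : ℝ) < s) with hS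
  refine ⟨S, c, 2 ^ s + |C0| + ∑ j ∈ Finset.range (n + 1), |c j|, ?_, by positivity, ?_⟩
  · intro j hj
    exact (Finset.mem_filter.1 hj).2
  intro y hy
  rcases le_or_gt y 1 with hy1 | hy1
  · have h1 : (1 + y) ^ s ≤ 2 ^ s := Real.rpow_le_rpow (by linarith) (by linarith) hs.le
    have h1' : 0 ≤ (1 + y) ^ s := Real.rpow_nonneg (by linarith) s
    have h2 : |∑ j ∈ S, c j * y ^ (s - j)| ≤ ∑ j ∈ Finset.range (n + 1), |c j| := by
      refine (Finset.abs_sum_le_sum_abs _ _).trans ?_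
      refine (Finset.sum_le_sum (g := fun j => |c j|) fun j hj => ?_).trans
        (Finset.sum_le_sum_of_subset_of_nonneg (Finset.filter_subset _ _)
          fun _ _ _ => abs_nonneg _)
      have hj := (Finset.mem_filter.1 hj).2
      rw [abs_mul, abs_of_nonneg (Real.rpow_nonneg hy _)]
      have := Real.rpow_le_one hy hy1 (show 0 ≤ s - j by linarith)
      nlinarith [abs_nonneg (c j)]
    have h3 := abs_sub ((1 + y) ^ s) (∑ j ∈ S, c j * y ^ (s - j))
    rw [abs_of_nonneg h1'] at h3
    linarith [abs_nonneg C0]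
  · have hy0 : 0 < y := by linarith
    set z := y⁻¹ with hz
    have hz0 : 0 < z := inv_pos.2 hy0
    have hz1 : z ≤ 1 := inv_le_one_of_one_le₀ hy1.le
    have hys : 0 < y ^ s := Real.rpow_pos_of_pos hy0 s
    have hpow : ∀ k : ℕ, y ^ s * z ^ k = y ^ (s - k) := by
      intro k
      rw [Real.rpow_sub hy0, Real.rpow_natCast, hz, inv_pow]; rfl
    have hm : y ^ s * (1 + z) ^ s = (1 + y) ^ s := by
      rw [← Real.mul_rpow hy0.le (by linarith), mul_add, hz, mul_inv_cancel₀ hy0.ne']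
      congr 1; ring
    have h1 := mul_le_mul_of_nonneg_left (hT z ⟨hz0.le, hz1⟩) hys.le
    have h2 : y ^ s * |(1 + z) ^ s - ∑ k ∈ Finset.range (n + 1), c k * z ^ k|
        = |(1 + y) ^ s - ∑ k ∈ Finset.range (n + 1), c k * y ^ (s - k)| := by
      have e0 : ∀ X : ℝ, y ^ s * |X| = |y ^ s * X| := fun X => by rw [abs_mul, abs_of_pos hys]
      rw [e0, mul_sub, hm, Finset.mul_sum]
      congr 2
      exact Finset.sum_congr rfl fun k _ => by rw [← hpow k]; ring
    rw [h2] at h1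
    have h3 : y ^ s * (|C0| * z ^ (n + 1)) ≤ |C0| := by
      rw [mul_left_comm, hpow]
      have := Real.rpow_le_one_of_one_le_of_nonpos hy1.le
        (show s - ((n + 1 : ℕ) : ℝ) ≤ 0 by push_cast; linarith)
      nlinarith [abs_nonneg C0]
    have h4 : ∑ k ∈ Finset.range (n + 1), c k * y ^ (s - k) = ∑ k ∈ S, c k * y ^ (s - k)
        + ∑ k ∈ (Finset.range (n + 1)).filter (fun j : ℕ => ¬ (j : ℝ) < s),
          c k * y ^ (s - k) := (Finset.sum_filter_add_sum_filter_not _ _ _).symm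
    set R := ∑ k ∈ (Finset.range (n + 1)).filter (fun j : ℕ => ¬ (j : ℝ) < s),
          c k * y ^ (s - k) with hR
    have h5 : |R| ≤ ∑ j ∈ Finset.range (n + 1), |c j| := by
      refine (Finset.abs_sum_le_sum_abs _ _).trans ?_
      refine (Finset.sum_le_sum (g := fun j => |c j|) fun j hj => ?_).trans
        (Finset.sum_le_sum_of_subset_of_nonneg (Finset.filter_subset _ _)
          fun _ _ _ => abs_nonneg _)
      have hj := (Finset.mem_filter.1 hj).2
      rw [abs_mul, abs_of_nonneg (Real.rpow_nonneg hy _)]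
      have := Real.rpow_le_one_of_one_le_of_nonpos hy1.le (show s - j ≤ 0 by linarith)
      nlinarith [abs_nonneg (c j)]
    have h6 : (1 + y) ^ s - ∑ j ∈ S, c j * y ^ (s - j)
        = ((1 + y) ^ s - ∑ k ∈ Finset.range (n + 1), c k * y ^ (s - k)) + R := by
      rw [h4]; ring
    rw [h6]
    refine (abs_add_le _ _).trans ?_
    have : (0 : ℝ) ≤ 2 ^ s := by positivity
    linarith

lemma wint (u v : 𝓢(ℝ, ℝ)) (F : ℝ → ℝ) (hF : AEStronglyMeasurable F) (K : ℝ) (k : ℕ)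
    (h : ∀ ξ, |F ξ| ≤ K * (1 + |ξ| ^ k)) :
    Integrable (fun ξ => F ξ * (‖hat u ξ‖ * ‖hat v ξ‖)) := by
  have h1 := (hat u).integrable_pow_mul volume 0
  have h2 := (hat u).integrable_pow_mul volume k
  obtain ⟨B, hB⟩ : ∃ B, ∀ ξ, ‖hat v ξ‖ ≤ B := by
    obtain ⟨B, _, hB⟩ := (hat v).decay 0 0
    exact ⟨B, fun ξ => by simpa using hB ξ⟩
  have hi : Integrable (fun ξ => K * B * (‖ξ‖ ^ 0 * ‖hat u ξ‖ + ‖ξ‖ ^ k * ‖hat u ξ‖)) :=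
    (h1.add h2).const_mul _
  refine hi.mono' (hF.mul (Continuous.aestronglyMeasurable ?_)) (Filter.Eventually.of_forall fun ξ => ?_)
  · have := (hat u).continuous
    have := (hat v).continuous
    fun_prop
  · rw [norm_mul, Real.norm_eq_abs, Real.norm_eq_abs, abs_of_nonneg (by positivity : 0 ≤ ‖hat u ξ‖ * ‖hat v ξ‖)]
    have a1 := mul_le_mul_of_nonneg_left (hB ξ) (norm_nonneg (hat u ξ))
    have a0 : 0 ≤ K * (1 + |ξ| ^ k) := (abs_nonneg _).trans (h ξ)
    have := mul_le_mul (h ξ) a1 (by positivity) a0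
    refine this.trans (le_of_eq ?_)
    rw [Real.norm_eq_abs]; ring

lemma wint_sq (u : 𝓢(ℝ, ℝ)) (F : ℝ → ℝ) (hF : AEStronglyMeasurable F) (K : ℝ) (k : ℕ)
    (h : ∀ ξ, |F ξ| ≤ K * (1 + |ξ| ^ k)) :
    Integrable (fun ξ => F ξ * ‖hat u ξ‖ ^ 2) := by
  simpa only [sq] using wint u u F hF K k h

lemma wint_PP (u v : 𝓢(ℝ, ℝ)) (F : ℝ → ℝ) (hF : AEStronglyMeasurable F) (K : ℝ) (k : ℕ)
    (h : ∀ ξ, |F ξ| ≤ K * (1 + |ξ| ^ k)) :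
    Integrable (fun ξ => F ξ * PP u v ξ) := by
  refine (wint u v F hF K k h).norm.mono' (hF.mul (PP_cont u v).aestronglyMeasurable)
    (Filter.Eventually.of_forall fun ξ => ?_)
  rw [norm_mul, norm_mul]
  refine mul_le_mul_of_nonneg_left ?_ (norm_nonneg _)
  rw [Real.norm_eq_abs, Real.norm_eq_abs]
  exact (PP_abs_le u v ξ).trans (le_abs_self _)

/-- The weight. -/
def WW (s ξ : ℝ) : ℝ := (1 + ξ ^ 2) ^ s

/-- The energy. -/
def EE (s : ℝ) (u : 𝓢(ℝ, ℝ)) : ℝ := ∫ ξ, WW s ξ * ‖hat u ξ‖ ^ 2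

lemma WW_cont (s : ℝ) : Continuous (WW s) := by
  unfold WW
  refine Continuous.rpow_const (by fun_prop) fun ξ => Or.inl ?_
  positivity

lemma WW_pos (s ξ : ℝ) : 0 < WW s ξ := by unfold WW; positivity

lemma one_le_WW (s ξ : ℝ) (hs : 0 ≤ s) : 1 ≤ WW s ξ :=
  Real.one_le_rpow (by nlinarith) hs

lemma WW_le (s : ℝ) (n : ℕ) (hn : s < n) (ξ : ℝ) : |WW s ξ| ≤ 2 ^ (n - 1) * (1 + |ξ| ^ (2 * n)) := by
  rw [abs_of_pos (WW_pos s ξ)]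
  have h1 : WW s ξ ≤ (1 + ξ ^ 2) ^ n := by
    unfold WW
    rw [← Real.rpow_natCast (1 + ξ ^ 2) n]
    exact Real.rpow_le_rpow_of_exponent_le
      (show (1 : ℝ) ≤ 1 + ξ ^ 2 by nlinarith [sq_nonneg ξ]) hn.le
  refine h1.trans ((add_pow_le zero_le_one (sq_nonneg ξ) n).trans (le_of_eq ?_))
  rw [one_pow, pow_mul, sq_abs]

lemma sq_rpow_le_WW (σ s ξ : ℝ) (h0 : 0 ≤ σ) (h1 : σ ≤ s) : (ξ ^ 2) ^ σ ≤ WW s ξ := by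
  unfold WW
  exact (Real.rpow_le_rpow (sq_nonneg ξ) (by linarith) h0).trans
    (Real.rpow_le_rpow_of_exponent_le (by nlinarith) h1)

lemma sq_rpow_meas (σ : ℝ) : Measurable (fun ξ : ℝ => (ξ ^ 2) ^ σ) := by fun_prop

lemma WW_int (s : ℝ) (u : 𝓢(ℝ, ℝ)) : Integrable (fun ξ => WW s ξ * ‖hat u ξ‖ ^ 2) := by
  obtain ⟨n, hn⟩ := exists_nat_gt s
  exact wint_sq u _ (WW_cont s).aestronglyMeasurable _ _ (WW_le s n hn)

lemma WW_PP_int (s : ℝ) (u v : 𝓢(ℝ, ℝ)) : Integrable (fun ξ => WW s ξ * PP u v ξ) := by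
  obtain ⟨n, hn⟩ := exists_nat_gt s
  exact wint_PP u v _ (WW_cont s).aestronglyMeasurable _ _ (WW_le s n hn)

lemma EE_nonneg (s : ℝ) (u : 𝓢(ℝ, ℝ)) : 0 ≤ EE s u :=
  integral_nonneg fun ξ => mul_nonneg (WW_pos s ξ).le (sq_nonneg _)

lemma N2_le_EE (s : ℝ) (hs : 0 ≤ s) (u : 𝓢(ℝ, ℝ)) : N2 u ≤ EE s u := by
  rw [N2_hat]
  refine integral_mono (hat_sq_int u) (WW_int s u) fun ξ => ?_
  have := one_le_WW s ξ hs
  have h2 := sq_nonneg ‖hat u ξ‖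
  simp only
  nlinarith

lemma N2_V (u : 𝓢(ℝ, ℝ)) (M : ℝ) (hM : 0 ≤ M) (hu : ∀ x, |dd u x| ≤ M) :
    N2 (pm u (dd u)) ≤ M ^ 2 * N2 u := by
  unfold N2
  rw [← integral_const_mul]
  refine integral_mono (int_sq _) ((int_sq u).const_mul _) fun x => ?_
  simp only [pm_apply]
  have h1 : (dd u x) ^ 2 ≤ M ^ 2 := by
    rw [← sq_abs]; exact pow_le_pow_left₀ (abs_nonneg _) (hu x) 2
  nlinarith [sq_nonneg (u x)]

lemma bdd_good (r : ℝ → ℝ) (c : ℝ) (hr : ∀ ξ, |r ξ| ≤ c)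
    (u : 𝓢(ℝ, ℝ)) (M : ℝ) (hM : 0 ≤ M) (hu : ∀ x, |dd u x| ≤ M) :
    |∫ ξ, r ξ * PP u (pm u (dd u)) ξ| ≤ c * M * N2 u := by
  have hc : 0 ≤ c := (abs_nonneg _).trans (hr 0)
  set V := pm u (dd u) with hV
  have hNV := N2_V u M hM hu
  rcases hM.eq_or_lt with h0 | hpos
  · subst h0
    have hV0 : V = 0 := by
      ext x
      have : dd u x = 0 := abs_nonpos_iff.1 (hu x)
      rw [hV, pm_apply, this, mul_zero]; rfl
    have : ∀ ξ, PP u V ξ = 0 := by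
      intro ξ
      have h0 : hat V = 0 := by rw [hV0, hat, map_zero, FourierTransform.fourier_zero]
      simp [PP, h0]
    simp [this]
  · have hi : Integrable (fun ξ => c * (M * ‖hat u ξ‖ ^ 2 + M⁻¹ * ‖hat V ξ‖ ^ 2) / 2) :=
      ((((hat_sq_int u).const_mul M).add ((hat_sq_int V).const_mul M⁻¹)).const_mul c).div_const 2
    rw [← Real.norm_eq_abs]
    refine (norm_integral_le_of_norm_le hi (Filter.Eventually.of_forall fun ξ => ?_)).trans ?_
    · rw [Real.norm_eq_abs, abs_mul]
      have h1 : |PP u V ξ| ≤ (M * ‖hat u ξ‖ ^ 2 + M⁻¹ * ‖hat V ξ‖ ^ 2) / 2 := by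
        refine (PP_abs_le u V ξ).trans ?_
        have := sq_nonneg (M * ‖hat u ξ‖ - ‖hat V ξ‖)
        have h3 : (M * ‖hat u ξ‖ ^ 2 + M⁻¹ * ‖hat V ξ‖ ^ 2) / 2 - ‖hat u ξ‖ * ‖hat V ξ‖
            = M⁻¹ / 2 * (M * ‖hat u ξ‖ - ‖hat V ξ‖) ^ 2 := by field_simp; ring
        have h4 : 0 ≤ M⁻¹ / 2 * (M * ‖hat u ξ‖ - ‖hat V ξ‖) ^ 2 := by positivity
        linarith
      have := mul_le_mul (hr ξ) h1 (abs_nonneg _) hc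
      linarith
    · rw [integral_div, integral_const_mul, integral_add ((hat_sq_int u).const_mul M)
        ((hat_sq_int V).const_mul M⁻¹), integral_const_mul, integral_const_mul, ← N2_hat, ← N2_hat]
      have h5 : M⁻¹ * N2 V ≤ M * N2 u := by
        rw [inv_mul_le_iff₀ hpos]; linarith
      nlinarith

lemma fub1 (σ : ℝ) (p : ℕ) (hp : σ < p) (u v : 𝓢(ℝ, ℝ)) :
    Integrable (Function.uncurry fun (ξ h : ℝ) => h ^ (-1 - 2 * σ) * th (h * ξ) ^ p * PP u v ξ)
      ((volume : Measure ℝ).prod (volume.restrict (Set.Ioc (0 : ℝ) 1))) := by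
  have hA : Integrable (fun ξ : ℝ => (((2 * Real.pi) ^ 2) ^ p * ξ ^ (2 * p)) * PP u v ξ) := by
    refine wint_PP u v _ (by fun_prop) (((2 * Real.pi) ^ 2) ^ p) (2 * p) fun ξ => ?_
    rw [abs_mul, abs_of_nonneg (by positivity), abs_pow]
    exact mul_le_mul_of_nonneg_left (by linarith) (by positivity)
  have hB : Integrable (fun y : ℝ => y ^ (2 * p - 1 - 2 * σ)) (volume.restrict (Set.Ioc (0 : ℝ) 1)) := by
    have := (intervalIntegral.intervalIntegrable_rpow' (a := 0) (b := 1)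
        (r := 2 * p - 1 - 2 * σ) (by linarith))
    rwa [intervalIntegrable_iff_integrableOn_Ioc_of_le zero_le_one] at this
  have hm : Measurable (Function.uncurry fun (ξ h : ℝ) =>
      h ^ (-1 - 2 * σ) * th (h * ξ) ^ p * PP u v ξ) := by
    have h1 := th_cont.measurable
    have h2 := (PP_cont u v).measurable
    unfold Function.uncurry
    fun_prop
  refine (hA.mul_prod hB).norm.mono' hm.aestronglyMeasurable ?_
  have hmem : ∀ᵐ z ∂((volume : Measure ℝ).prod (volume.restrict (Set.Ioc (0 : ℝ) 1))),
      z.2 ∈ Set.Ioc (0 : ℝ) 1 :=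
    Measure.quasiMeasurePreserving_snd.ae (ae_restrict_mem measurableSet_Ioc)
  refine hmem.mono fun z hz => ?_
  obtain ⟨ξ, h⟩ := z
  simp only [Function.uncurry] at hz ⊢
  have hy0 : 0 < h := hz.1
  have e : (2 * p - 1 - 2 * σ : ℝ) = (-1 - 2 * σ) + ((2 * p : ℕ) : ℝ) := by push_cast; ring
  rw [e, Real.rpow_add hy0, Real.rpow_natCast]
  have h1 := th_pow_le p (h * ξ)
  rw [mul_pow h ξ] at h1
  have h3 : 0 ≤ ξ ^ (2 * p) := by rw [pow_mul]; positivity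
  simp only [norm_mul, Real.norm_eq_abs]
  rw [abs_of_nonneg (pow_nonneg (th_nonneg _) p), abs_of_pos (Real.rpow_pos_of_pos hy0 (-1 - 2 * σ)),
    abs_of_nonneg h3, abs_of_nonneg (by positivity : 0 ≤ ((2 * Real.pi) ^ 2) ^ p),
    abs_of_pos (pow_pos hy0 _)]
  have h2 := mul_le_mul_of_nonneg_left h1 (Real.rpow_pos_of_pos hy0 (-1 - 2 * σ)).le
  have := mul_le_mul_of_nonneg_right h2 (abs_nonneg (PP u v ξ))
  linarith

lemma fub2 (s : ℝ) (p : ℕ) (hp : s < p) (u : 𝓢(ℝ, ℝ)) :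
    Integrable (Function.uncurry fun (ξ h : ℝ) =>
      h ^ (-1 - 2 * s) * (th (h * ξ) ^ p * (1 + (h * ξ) ^ 2)) * ‖hat u ξ‖ ^ 2)
      ((volume : Measure ℝ).prod (volume.restrict (Set.Ioc (0 : ℝ) 1))) := by
  have hA : Integrable (fun ξ : ℝ =>
      (((2 * Real.pi) ^ 2) ^ p * ξ ^ (2 * p) * (1 + ξ ^ 2)) * ‖hat u ξ‖ ^ 2) := by
    refine wint_sq u _ (by fun_prop) (2 * ((2 * Real.pi) ^ 2) ^ p) (2 * p + 2) fun ξ => ?_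
    rw [abs_mul, abs_mul, abs_of_nonneg (by positivity), abs_pow,
      abs_of_nonneg (by positivity : 0 ≤ 1 + ξ ^ 2), ← sq_abs ξ]
    have h0 := abs_nonneg ξ
    have : |ξ| ^ (2 * p) ≤ 1 + |ξ| ^ (2 * p + 2) := by
      rcases le_or_gt |ξ| 1 with h | h
      · have := pow_le_one₀ (n := 2 * p) h0 h
        have : 0 ≤ |ξ| ^ (2 * p + 2) := by positivity
        linarith
      · have := pow_le_pow_right₀ (m := 2 * p) (n := 2 * p + 2) h.le (by omega)
        linarith
    have h1 : |ξ| ^ (2 * p) * (1 + |ξ| ^ 2) ≤ 2 * (1 + |ξ| ^ (2 * p + 2)) := by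
      rw [mul_add, ← pow_add]; linarith
    have := mul_le_mul_of_nonneg_left h1 (by positivity : 0 ≤ ((2 * Real.pi) ^ 2) ^ p)
    linarith
  have hB : Integrable (fun y : ℝ => y ^ (2 * p - 1 - 2 * s)) (volume.restrict (Set.Ioc (0 : ℝ) 1)) := by
    have := (intervalIntegral.intervalIntegrable_rpow' (a := 0) (b := 1)
        (r := 2 * p - 1 - 2 * s) (by linarith))
    rwa [intervalIntegrable_iff_integrableOn_Ioc_of_le zero_le_one] at this
  have hm : Measurable (Function.uncurry fun (ξ h : ℝ) =>
      h ^ (-1 - 2 * s) * (th (h * ξ) ^ p * (1 + (h * ξ) ^ 2)) * ‖hat u ξ‖ ^ 2) := by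
    have h1 := th_cont.measurable
    have h2 := (hat u).continuous.measurable
    unfold Function.uncurry
    fun_prop
  refine (hA.mul_prod hB).norm.mono' hm.aestronglyMeasurable ?_
  have hmem : ∀ᵐ z ∂((volume : Measure ℝ).prod (volume.restrict (Set.Ioc (0 : ℝ) 1))),
      z.2 ∈ Set.Ioc (0 : ℝ) 1 :=
    Measure.quasiMeasurePreserving_snd.ae (ae_restrict_mem measurableSet_Ioc)
  refine hmem.mono fun z hz => ?_
  obtain ⟨ξ, h⟩ := z
  simp only [Function.uncurry] at hz ⊢
  have hy0 : 0 < h := hz.1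
  have e : (2 * p - 1 - 2 * s : ℝ) = (-1 - 2 * s) + ((2 * p : ℕ) : ℝ) := by push_cast; ring
  rw [e, Real.rpow_add hy0, Real.rpow_natCast]
  have h1 := th_pow_le p (h * ξ)
  rw [mul_pow h ξ] at h1
  have h3 : 0 ≤ ξ ^ (2 * p) := by rw [pow_mul]; positivity
  have h4 : 1 + (h * ξ) ^ 2 ≤ 1 + ξ ^ 2 := by
    have : h ^ 2 ≤ 1 := pow_le_one₀ hy0.le hz.2
    rw [mul_pow]; nlinarith [sq_nonneg ξ]
  have ht := pow_nonneg (th_nonneg (h * ξ)) p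
  have hr := (Real.rpow_pos_of_pos hy0 (-1 - 2 * s)).le
  have hh := (pow_pos hy0 (2 * p)).le
  have hq : 0 ≤ ((2 * Real.pi) ^ 2) ^ p := by positivity
  rw [Real.norm_eq_abs, Real.norm_eq_abs, abs_of_nonneg (by positivity), abs_of_nonneg (by positivity)]
  have h5 := mul_le_mul h1 h4 (by positivity) (by positivity)
  have h2 := mul_le_mul_of_nonneg_left h5 hr
  have := mul_le_mul_of_nonneg_right h2 (sq_nonneg ‖hat u ξ‖)
  linarith

lemma W3 (s : ℝ) (hs : 1 < s) (σ : ℝ) (h0 : 0 < σ) (hσ : σ ≤ s) : ∃ C : ℝ, 0 ≤ C ∧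
    ∀ (u : 𝓢(ℝ, ℝ)) (M : ℝ), 0 ≤ M → (∀ x, |dd u x| ≤ M) →
    |∫ ξ, (ξ ^ 2) ^ σ * PP u (pm u (dd u)) ξ| ≤ C * M * EE s u := by
  obtain ⟨n, hn⟩ := exists_nat_gt s
  have hn1 : 1 ≤ n := by
    have : (1 : ℝ) < n := by linarith
    exact_mod_cast this.le
  have hp : σ < ((2 * n : ℕ) : ℝ) := by push_cast; linarith
  obtain ⟨C0, hC0, H0⟩ := K1 n hn1
  obtain ⟨C1, hC1, H1⟩ := W1 s n hs hn
  obtain ⟨C2, hC2, H2⟩ := tail_bound σ (2 * n) h0 hp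
  have hA := kerA_pos σ (2 * n) h0 hp
  have hW := W2 σ (2 * n) h0 hp
  set A := ∫ y in Set.Ioi (0 : ℝ), y ^ (-1 - 2 * σ) * th y ^ (2 * n) with hAdef
  refine ⟨A⁻¹ * (C0 * C1 + C2), by positivity, fun u M hM hu => ?_⟩
  set V := pm u (dd u) with hV
  set R : ℝ → ℝ := fun ξ => ∫ h in Set.Ioi (1 : ℝ), h ^ (-1 - 2 * σ) * th (h * ξ) ^ (2 * n) with hR
  set J : ℝ → ℝ := fun ξ => ∫ h in Set.Ioc (0 : ℝ) 1, h ^ (-1 - 2 * σ) * th (h * ξ) ^ (2 * n) with hJ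
  have hsplit : ∀ ξ, A * (ξ ^ 2) ^ σ = J ξ + R ξ := by
    intro ξ
    rw [← hW ξ, ← Set.Ioc_union_Ioi_eq_Ioi (zero_le_one (α := ℝ))]
    have := kerA_int' σ (2 * n) h0 hp ξ
    exact setIntegral_union (Set.Ioc_disjoint_Ioi le_rfl) measurableSet_Ioi
      (this.mono_set Set.Ioc_subset_Ioi_self) (this.mono_set (Set.Ioi_subset_Ioi zero_le_one))
  have hF1 := fub1 σ (2 * n) hp u V
  have hF2 := fub2 s n hn u
  have hJeq : ∀ ξ, J ξ * PP u V ξ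
      = ∫ h in Set.Ioc (0 : ℝ) 1, h ^ (-1 - 2 * σ) * th (h * ξ) ^ (2 * n) * PP u V ξ := by
    intro ξ; rw [integral_mul_const]
  have hJi : Integrable (fun ξ => J ξ * PP u V ξ) := by
    simp only [hJeq]; exact hF1.integral_prod_left
  have hTi : Integrable (fun ξ : ℝ => (ξ ^ 2) ^ σ * PP u V ξ) := by
    refine wint_PP u V _ (sq_rpow_meas _).aestronglyMeasurable (2 ^ (n - 1)) (2 * n) fun ξ => ?_
    have h1 := sq_rpow_le_WW σ s ξ h0.le hσ
    have h2 := (le_abs_self _).trans (WW_le s n hn ξ)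
    rw [abs_of_nonneg (by positivity)]
    linarith
  have hRi : Integrable (fun ξ => R ξ * PP u V ξ) := by
    refine ((hTi.const_mul A).sub hJi).congr (Filter.Eventually.of_forall fun ξ => ?_)
    simp only [Pi.sub_apply]
    rw [← mul_assoc, hsplit]; ring
  have htot : A * ∫ ξ, (ξ ^ 2) ^ σ * PP u V ξ = (∫ ξ, J ξ * PP u V ξ) + ∫ ξ, R ξ * PP u V ξ := by
    rw [← integral_add hJi hRi, ← integral_const_mul]
    refine integral_congr_ae (Filter.Eventually.of_forall fun ξ => ?_)
    simp only
    rw [← mul_assoc, hsplit]; ring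
  have hRb : |∫ ξ, R ξ * PP u V ξ| ≤ C2 * M * EE s u := by
    refine (bdd_good R C2 H2 u M hM hu).trans ?_
    exact mul_le_mul_of_nonneg_left (N2_le_EE s (by linarith) u) (by positivity)
  have hJb : |∫ ξ, J ξ * PP u V ξ| ≤ C0 * M * (C1 * EE s u) := by
    simp only [hJeq]
    rw [integral_integral_swap hF1]
    have hQ := hF2.integral_prod_right
    have step1 : |∫ h in Set.Ioc (0 : ℝ) 1, ∫ ξ, h ^ (-1 - 2 * σ) * th (h * ξ) ^ (2 * n) * PP u V ξ|
        ≤ ∫ h in Set.Ioc (0 : ℝ) 1, C0 * M * ∫ ξ,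
          h ^ (-1 - 2 * s) * (th (h * ξ) ^ n * (1 + (h * ξ) ^ 2)) * ‖hat u ξ‖ ^ 2 := by
      rw [← Real.norm_eq_abs]
      refine norm_integral_le_of_norm_le (hQ.const_mul (C0 * M)) ?_
      refine (ae_restrict_mem measurableSet_Ioc).mono fun h hh => ?_
      have hh0 : 0 < h := hh.1
      simp only [mul_assoc]
      simp only [integral_const_mul]
      rw [Real.norm_eq_abs, abs_mul, abs_of_pos (Real.rpow_pos_of_pos hh0 _)]
      have k1 := H0 h u M hM hu
      simp only [mul_assoc] at k1
      have k2 : h ^ (-1 - 2 * σ) ≤ h ^ (-1 - 2 * s) :=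
        Real.rpow_le_rpow_of_exponent_ge hh0 hh.2 (by linarith)
      refine (mul_le_mul k2 k1 (abs_nonneg _) (by positivity)).trans (le_of_eq ?_)
      ring
    refine step1.trans ?_
    rw [integral_const_mul]
    refine mul_le_mul_of_nonneg_left ?_ (by positivity)
    rw [← integral_integral_swap hF2]
    unfold EE
    rw [← integral_const_mul]
    refine integral_mono hF2.integral_prod_left ((WW_int s u).const_mul C1) fun ξ => ?_
    simp only
    rw [integral_mul_const, ← mul_assoc]
    refine mul_le_mul_of_nonneg_right ((H1 ξ).trans ?_) (sq_nonneg _)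
    exact mul_le_mul_of_nonneg_left (sq_rpow_le_WW s s ξ (by linarith) le_rfl) hC1
  have hfin : A * |∫ ξ, (ξ ^ 2) ^ σ * PP u V ξ| ≤ (C0 * C1 + C2) * M * EE s u := by
    have e0 : ∀ X : ℝ, A * |X| = |A * X| := fun X => by rw [abs_mul, abs_of_pos hA]
    rw [e0, htot]
    refine (abs_add_le _ _).trans ?_
    linarith
  rw [mul_assoc, mul_assoc, le_inv_mul_iff₀ hA]
  linarith

/-- The key commutator estimate. -/
lemma key (s : ℝ) (hs : 1 < s) : ∃ C : ℝ, 0 ≤ C ∧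
    ∀ (u : 𝓢(ℝ, ℝ)) (M : ℝ), 0 ≤ M → (∀ x, |dd u x| ≤ M) →
    |∫ ξ, WW s ξ * PP u (pm u (dd u)) ξ| ≤ C * M * EE s u := by
  obtain ⟨n, hn⟩ := exists_nat_gt s
  obtain ⟨S, c, C0, hS, hC0, H0⟩ := taylor_weight s (by linarith)
  have hex : ∀ j : ℕ, ∃ C : ℝ, 0 ≤ C ∧ (j ∈ S → 
    ∀ (u : 𝓢(ℝ, ℝ)) (M : ℝ), 0 ≤ M → (∀ x, |dd u x| ≤ M) →
    |∫ ξ, (ξ ^ 2) ^ (s - j) * PP u (pm u (dd u)) ξ| ≤ C * M * EE s u) := by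
    intro j
    by_cases hj : j ∈ S
    · have hj0 : (0 : ℝ) ≤ j := Nat.cast_nonneg j
      obtain ⟨C, hC, H⟩ := W3 s hs (s - j) (by linarith [hS j hj]) (by linarith)
      exact ⟨C, hC, fun _ => H⟩
    · exact ⟨0, le_rfl, fun h => absurd h hj⟩
  choose D hD HD using hex
  refine ⟨C0 + ∑ j ∈ S, |c j| * D j,
    add_nonneg hC0 (Finset.sum_nonneg fun j _ => mul_nonneg (abs_nonneg _) (hD j)), 
    fun u M hM hu => ?_⟩
  set V := pm u (dd u) with hV
  set r : ℝ → ℝ := fun ξ => WW s ξ - ∑ j ∈ S, c j * (ξ ^ 2) ^ (s - j) with hr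
  have hTi : ∀ j ∈ S, Integrable (fun ξ : ℝ => c j * ((ξ ^ 2) ^ (s - j) * PP u V ξ)) := by
    intro j hj
    refine Integrable.const_mul ?_ _
    refine wint_PP u V _ (sq_rpow_meas _).aestronglyMeasurable (2 ^ (n - 1)) (2 * n) fun ξ => ?_
    have h1 := sq_rpow_le_WW (s - j) s ξ (by linarith [hS j hj]) (by linarith [(Nat.cast_nonneg j : (0 : ℝ) ≤ j)])
    have h2 := (le_abs_self _).trans (WW_le s n hn ξ)
    rw [abs_of_nonneg (by positivity)]
    linarith
  have hsi := integrable_finsetSum S hTi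
  have e1 : ∫ ξ, r ξ * PP u V ξ = (∫ ξ, WW s ξ * PP u V ξ)
      - ∑ j ∈ S, c j * ∫ ξ, (ξ ^ 2) ^ (s - j) * PP u V ξ := by
    have e2 : ∑ j ∈ S, c j * ∫ ξ, (ξ ^ 2) ^ (s - j) * PP u V ξ
        = ∫ ξ, ∑ j ∈ S, c j * ((ξ ^ 2) ^ (s - j) * PP u V ξ) := by
      rw [integral_finsetSum S hTi]
      exact Finset.sum_congr rfl fun j _ => (integral_const_mul _ _).symm
    rw [e2, ← integral_sub (WW_PP_int s u V) hsi]
    refine integral_congr_ae (Filter.Eventually.of_forall fun ξ => ?_)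
    simp only [hr]
    rw [sub_mul, Finset.sum_mul]
    congr 1
    exact Finset.sum_congr rfl fun j _ => by ring
  have e3 : ∫ ξ, WW s ξ * PP u V ξ = (∫ ξ, r ξ * PP u V ξ)
      + ∑ j ∈ S, c j * ∫ ξ, (ξ ^ 2) ^ (s - j) * PP u V ξ := by linarith
  rw [e3]
  refine (abs_add_le _ _).trans ?_
  have b1 : |∫ ξ, r ξ * PP u V ξ| ≤ C0 * M * EE s u := by
    refine (bdd_good r C0 (fun ξ => H0 (ξ ^ 2) (sq_nonneg ξ)) u M hM hu).trans ?_
    exact mul_le_mul_of_nonneg_left (N2_le_EE s (by linarith) u) (by positivity)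
  have b2 : |∑ j ∈ S, c j * ∫ ξ, (ξ ^ 2) ^ (s - j) * PP u V ξ|
      ≤ (∑ j ∈ S, |c j| * D j) * M * EE s u := by
    refine (Finset.abs_sum_le_sum_abs _ _).trans ?_
    rw [Finset.sum_mul, Finset.sum_mul]
    refine Finset.sum_le_sum fun j hj => ?_
    rw [abs_mul]
    have := mul_le_mul_of_nonneg_left (HD j hj u M hM hu) (abs_nonneg (c j))
    linarith
  linarith

lemma pm_seminorm (f g : 𝓢(ℝ, ℝ)) (k n : ℕ) :
    SchwartzMap.seminorm ℝ k n (pm f g) ≤ ∑ i ∈ Finset.range (n + 1), (n.choose i : ℝ) *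
      SchwartzMap.seminorm ℝ k i f * SchwartzMap.seminorm ℝ 0 (n - i) g := by
  refine seminorm_le_bound ℝ k n _ (Finset.sum_nonneg fun i _ => by positivity) fun x => ?_
  have e : (⇑(pm f g) : ℝ → ℝ) = fun y => f y * g y := by ext y; exact pm_apply f g y
  rw [e]
  have h1 := norm_iteratedFDeriv_mul_le (𝕜 := ℝ) (A := ℝ) (f := ⇑f) (g := ⇑g) (N := (n : ℕ∞)) (n := n)
    ((f.smooth n)) ((g.smooth n)) x le_rfl
  refine (mul_le_mul_of_nonneg_left h1 (by positivity)).trans ?_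
  rw [Finset.mul_sum]
  refine Finset.sum_le_sum fun i _ => ?_
  have a1 := le_seminorm ℝ k i f x
  have a2 := norm_iteratedFDeriv_le_seminorm ℝ g (n - i) x
  have := mul_le_mul a1 a2 (norm_nonneg _) (by positivity)
  have := mul_le_mul_of_nonneg_left this (Nat.cast_nonneg (n.choose i) : (0 : ℝ) ≤ _)
  linarith

lemma semi_cont (k n : ℕ) : Continuous (fun f : 𝓢(ℝ, ℝ) => SchwartzMap.seminorm ℝ k n f) :=
  (schwartz_withSeminorms ℝ ℝ ℝ).continuous_seminorm (k, n)

lemma semi_contC (k n : ℕ) : Continuous (fun f : 𝓢(ℝ, ℂ) => SchwartzMap.seminorm ℝ k n f) :=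
  (schwartz_withSeminorms ℝ ℝ ℂ).continuous_seminorm (k, n)

lemma pm_curve (a b : ℝ → 𝓢(ℝ, ℝ)) (ha : Continuous a) (hb : Continuous b) :
    Continuous (fun τ => pm (a τ) (b τ)) := by
  rw [continuous_iff_continuousAt]
  intro τ₀
  have e : ∀ τ, pm (a τ) (b τ) = pm (a τ - a τ₀) (b τ - b τ₀) + (pm (a τ) (b τ₀) + pm (a τ₀) (b τ)
      - pm (a τ₀) (b τ₀)) := by
    intro τ; ext x
    simp only [pm_apply, add_apply, sub_apply]
    ring
  rw [funext e]
  have h1 : Continuous (fun τ => pm (a τ) (b τ₀)) :=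
    (pairing_continuous_left (ContinuousLinearMap.mul ℝ ℝ) (b τ₀)).comp ha
  have h2 : Continuous (fun τ => pm (a τ₀) (b τ)) :=
    (pairing (ContinuousLinearMap.mul ℝ ℝ) (a τ₀)).continuous.comp hb
  refine ContinuousAt.add ?_ ((h1.add h2).sub continuous_const).continuousAt
  have hz : pm (a τ₀ - a τ₀) (b τ₀ - b τ₀) = 0 := by
    ext x; simp [pm_apply]
  rw [ContinuousAt, hz, (schwartz_withSeminorms ℝ ℝ ℝ).tendsto_nhds]
  rintro ⟨k, n⟩ δ hδ
  have hc : Continuous (fun τ => ∑ i ∈ Finset.range (n + 1), (n.choose i : ℝ) *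
      SchwartzMap.seminorm ℝ k i (a τ - a τ₀) * SchwartzMap.seminorm ℝ 0 (n - i) (b τ - b τ₀)) := by
    refine continuous_finsetSum _ fun i _ => ?_
    exact (continuous_const.mul ((semi_cont k i).comp (ha.sub continuous_const))).mul
      ((semi_cont 0 (n - i)).comp (hb.sub continuous_const))
  have ht := hc.tendsto τ₀
  simp only [sub_self, map_zero, mul_zero, Finset.sum_const_zero] at ht
  filter_upwards [ht.eventually_lt_const hδ] with τ hτ
  rw [sub_zero]
  exact (pm_seminorm _ _ k n).trans_lt hτ

lemma hat_curve (a : ℝ → 𝓢(ℝ, ℝ)) (ha : Continuous a) : Continuous (fun τ => hat (a τ)) :=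
  (FourierTransform.fourierCLM ℂ 𝓢(ℝ, ℂ)).continuous.comp (cS.continuous.comp ha)

lemma curve_joint (g : ℝ → 𝓢(ℝ, ℂ)) (hg : Continuous g) :
    Continuous (fun z : ℝ × ℝ => g z.1 z.2) := by
  have h1 : Continuous (fun τ => toBoundedContinuousFunctionCLM ℂ ℝ ℂ (g τ)) :=
    (toBoundedContinuousFunctionCLM ℂ ℝ ℂ).continuous.comp hg
  exact (h1.comp continuous_fst).eval continuous_snd

lemma schw_bound (N : ℕ) (f : 𝓢(ℝ, ℂ)) (ξ : ℝ) : ‖f ξ‖ ≤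
    (2 ^ (N - 1) * (SchwartzMap.seminorm ℝ 0 0 f + SchwartzMap.seminorm ℝ (2 * N) 0 f)) *
      ((1 + ξ ^ 2) ^ N)⁻¹ := by
  have hp : 0 < (1 + ξ ^ 2) ^ N := by positivity
  rw [← div_eq_mul_inv, le_div_iff₀ hp]
  have h1 := norm_le_seminorm ℝ f ξ
  have h2 := norm_pow_mul_le_seminorm ℝ f (2 * N) ξ
  have h3 := add_pow_le zero_le_one (sq_nonneg ξ) N
  rw [Real.norm_eq_abs, pow_mul, sq_abs] at h2
  rw [one_pow] at h3
  have h4 := mul_le_mul_of_nonneg_left h3 (norm_nonneg (f ξ))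
  have h5 : 2 ^ (N - 1) * (‖f ξ‖ + (ξ ^ 2) ^ N * ‖f ξ‖) ≤
    (2 ^ (N - 1) * (SchwartzMap.seminorm ℝ 0 0 f + SchwartzMap.seminorm ℝ (2 * N) 0 f)) :=
    mul_le_mul_of_nonneg_left (add_le_add h1 h2) (by positivity)
  linarith

/-- Clamping to `[0,T]`. -/
def cl (T τ : ℝ) : ℝ := max 0 (min T τ)

lemma cl_cont (T : ℝ) : Continuous (cl T) := by unfold cl; fun_prop

lemma cl_mem (T τ : ℝ) (hT : 0 ≤ T) : cl T τ ∈ Set.Icc 0 T :=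
  ⟨le_max_left _ _, max_le hT (min_le_left _ _)⟩

lemma cl_eq (T τ : ℝ) (h : τ ∈ Set.Icc 0 T) : cl T τ = τ := by
  unfold cl; rw [min_eq_right h.2, max_eq_right h.1]

lemma curve_bound (g : ℝ → 𝓢(ℝ, ℂ)) (hg : Continuous g) (T : ℝ) (hT : 0 ≤ T) (N : ℕ) :
    ∃ K : ℝ, 0 ≤ K ∧ ∀ τ ξ, ‖g (cl T τ) ξ‖ ≤ K * ((1 + ξ ^ 2) ^ N)⁻¹ := by
  have hc : Continuous (fun τ => 2 ^ (N - 1) *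
      (SchwartzMap.seminorm ℝ 0 0 (g τ) + SchwartzMap.seminorm ℝ (2 * N) 0 (g τ))) :=
    continuous_const.mul (((semi_contC 0 0).comp hg).add ((semi_contC (2 * N) 0).comp hg))
  obtain ⟨K, hK⟩ := (isCompact_Icc (a := (0 : ℝ)) (b := T)).bddAbove_image hc.continuousOn
  have hK' : ∀ τ ∈ Set.Icc 0 T, 2 ^ (N - 1) *
      (SchwartzMap.seminorm ℝ 0 0 (g τ) + SchwartzMap.seminorm ℝ (2 * N) 0 (g τ)) ≤ K :=
    fun τ hτ => hK ⟨τ, hτ, rfl⟩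
  refine ⟨K, le_trans (by positivity) (hK' 0 ⟨le_rfl, hT⟩), fun τ ξ => ?_⟩
  refine (schw_bound N _ ξ).trans ?_
  exact mul_le_mul_of_nonneg_right (hK' _ (cl_mem T τ hT)) (by positivity)

lemma Tsymb_cont (μ : ℝ) (hμ : 0 < μ) : Continuous (Tsymb μ) := by
  have hd : HasDerivAt Real.tanh 1 0 := by
    have := (Real.hasDerivAt_sinh 0).div (Real.hasDerivAt_cosh 0) (by simp)
    have e : Real.tanh = fun x => Real.sinh x / Real.cosh x := by
      ext x; exact Real.tanh_eq_sinh_div_cosh x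
    rw [e]
    exact this.congr_deriv (by simp)
  have hs : 0 < Real.sqrt μ := Real.sqrt_pos.2 hμ
  have hcont : Continuous (dslope Real.tanh 0) := by
    rw [continuous_iff_continuousAt]
    intro x
    have ht : ∀ y, DifferentiableAt ℝ Real.tanh y := by
      intro y
      have e : Real.tanh = fun x => Real.sinh x / Real.cosh x := by
        ext x; exact Real.tanh_eq_sinh_div_cosh x
      rw [e]
      exact (Real.hasDerivAt_sinh y).differentiableAt.div
        (Real.hasDerivAt_cosh y).differentiableAt (Real.cosh_pos y).ne'
    rcases eq_or_ne x 0 with rfl | hx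
    · exact continuousAt_dslope_same.2 (ht 0)
    · exact (continuousAt_dslope_of_ne hx).2 (ht x).continuousAt
  have e : Tsymb μ = fun ξ => dslope Real.tanh 0 (Real.sqrt μ * |ξ|) := by
    ext ξ
    unfold Tsymb
    split_ifs with h
    · rw [h, abs_zero, mul_zero, dslope_same, hd.deriv]
    · have : Real.sqrt μ * |ξ| ≠ 0 := mul_ne_zero hs.ne' (abs_ne_zero.2 h)
      rw [dslope_of_ne _ this, slope_def_field, Real.tanh_zero, sub_zero, sub_zero]
  rw [e]
  exact hcont.comp (by fun_prop)

lemma Tsymb_le_one (μ ξ : ℝ) (hμ : 0 < μ) : Tsymb μ ξ ≤ 1 := by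
  unfold Tsymb
  split_ifs with h
  · exact le_rfl
  · have hy : 0 < Real.sqrt μ * |ξ| := mul_pos (Real.sqrt_pos.2 hμ) (abs_pos.2 h)
    set y := Real.sqrt μ * |ξ|
    rw [div_le_one hy, Real.tanh_eq_sinh_div_cosh, div_le_iff₀ (Real.cosh_pos y)]
    have h1 : MonotoneOn (fun z => z * Real.cosh z - Real.sinh z) (Set.Ici 0) := by
      have hd : ∀ z, HasDerivAt (fun z => z * Real.cosh z - Real.sinh z) (z * Real.sinh z) z := by
        intro z
        have := ((hasDerivAt_id z).mul (Real.hasDerivAt_cosh z)).sub (Real.hasDerivAt_sinh z)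
        exact this.congr_deriv (by simp)
      refine monotoneOn_of_deriv_nonneg (convex_Ici 0) (by fun_prop)
        (fun z _ => (hd z).differentiableAt.differentiableWithinAt) fun z hz => ?_
      rw [interior_Ici] at hz
      rw [(hd z).deriv]
      exact mul_nonneg (le_of_lt hz) (Real.sinh_nonneg_iff.2 (le_of_lt hz))
    have := h1 (Set.self_mem_Ici) (Set.mem_Ici.2 hy.le) hy.le
    simp only [Real.sinh_zero, zero_mul, sub_zero] at this
    linarith

lemma inv_pow_int (N : ℕ) (hN : 1 ≤ N) : Integrable (fun ξ : ℝ => ((1 + ξ ^ 2) ^ N)⁻¹) := by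
  refine integrable_inv_one_add_sq.mono' (by fun_prop) (Filter.Eventually.of_forall fun ξ => ?_)
  rw [Real.norm_eq_abs, abs_of_nonneg (by positivity)]
  have h1 : 1 ≤ 1 + ξ ^ 2 := by nlinarith [sq_nonneg ξ]
  exact inv_anti₀ (by positivity) (le_self_pow₀ h1 (by omega))

/-- The exponential kernel. -/
def ek (ξ x : ℝ) : ℂ := Complex.exp (((2 * Real.pi * (ξ * x) : ℝ) : ℂ) * Complex.I)

lemma ek_norm (ξ x : ℝ) : ‖ek ξ x‖ = 1 := Complex.norm_exp_ofReal_mul_I _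

lemma ek_cont (x : ℝ) : Continuous (fun ξ => ek ξ x) := by unfold ek; fun_prop

lemma finv (f : ℝ → ℂ) (x : ℝ) : 𝓕⁻ f x = ∫ ξ, ek ξ x * f ξ := by
  rw [Real.fourierInv_eq']
  refine integral_congr_ae (Filter.Eventually.of_forall fun ξ => ?_)
  simp [ek, mul_comm]

lemma ek_int (f : ℝ → ℂ) (hf : Integrable f) (x : ℝ) : Integrable (fun ξ => ek ξ x * f ξ) :=
  hf.bdd_mul (c := 1) (ek_cont x).aestronglyMeasurable
    (Filter.Eventually.of_forall fun ξ => (ek_norm ξ x).le)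

lemma hat_inv (u : 𝓢(ℝ, ℝ)) (x : ℝ) : 𝓕⁻ (fun ξ => hat u ξ) x = (u x : ℂ) := by
  have h : (𝓕⁻ (𝓕 (cS u) : 𝓢(ℝ, ℂ)) : 𝓢(ℝ, ℂ)) = cS u :=
    FourierTransform.fourierInv_fourier_eq (cS u)
  have h2 : (𝓕⁻ (hat u) : 𝓢(ℝ, ℂ)) x = cS u x := by rw [hat, h]
  rw [fourierInv_coe] at h2
  exact h2

lemma fourier_ode (Rh : ℝ → ℝ → ℂ) (hRc : Continuous (Function.uncurry Rh)) (b : ℝ → ℝ)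
    (hb : Integrable b) (hRb : ∀ τ ξ, ‖Rh τ ξ‖ ≤ b ξ)
    (η : ℝ → 𝓢(ℝ, ℝ)) (T : ℝ)
    (h : ∀ t ∈ Set.Icc (0 : ℝ) T, ∀ x, HasDerivAt (fun τ => ((η τ x : ℝ) : ℂ)) (𝓕⁻ (Rh t) x) t)
    (t : ℝ) (ht : t ∈ Set.Icc (0 : ℝ) T) (ξ : ℝ) :
    hat (η t) ξ = hat (η 0) ξ + ∫ τ in (0 : ℝ)..t, Rh τ ξ := by
  have hRc1 : ∀ τ, Continuous (Rh τ) := fun τ => hRc.comp (by fun_prop : Continuous fun ξ => (τ, ξ))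
  have hRi : ∀ τ, Integrable (Rh τ) := fun τ => hb.mono' (hRc1 τ).aestronglyMeasurable
    (Filter.Eventually.of_forall (hRb τ))
  set P : ℝ → ℂ := fun ξ => ∫ τ in (0 : ℝ)..t, Rh τ ξ with hP
  set G : ℝ → ℂ := fun ξ => hat (η 0) ξ + P ξ with hG
  have hPc : Continuous P := by
    refine intervalIntegral.continuous_parametric_intervalIntegral_of_continuous' ?_ 0 t
    exact hRc.comp continuous_swap
  have hGc : Continuous G := (hat (η 0)).continuous.add hPc
  have hPi : Integrable P := by
    refine (hb.const_mul |t - 0|).mono' hPc.aestronglyMeasurable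
      (Filter.Eventually.of_forall fun ξ => ?_)
    have := intervalIntegral.norm_integral_le_of_norm_le_const (a := (0 : ℝ)) (b := t)
      (f := fun τ => Rh τ ξ) (C := b ξ) fun τ _ => hRb τ ξ
    rw [mul_comm]; exact this
  have hGi : Integrable G := (hat (η 0)).integrable.add hPi
  have hinv : ∀ x, 𝓕⁻ G x = ((η t x : ℝ) : ℂ) := by
    intro x
    have hrc : Continuous (fun τ => 𝓕⁻ (Rh τ) x) := by
      simp only [finv]
      refine continuous_of_dominated (bound := b) (fun τ => ?_) (fun τ => ?_) hb ?_
      · exact ((ek_cont x).mul (hRc1 τ)).aestronglyMeasurable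
      · refine Filter.Eventually.of_forall fun ξ => ?_
        rw [norm_mul, ek_norm, one_mul]; exact hRb τ ξ
      · refine Filter.Eventually.of_forall fun ξ => ?_
        exact continuous_const.mul (hRc.comp (by fun_prop : Continuous fun τ => (τ, ξ)))
    have hftc : ∫ τ in (0 : ℝ)..t, 𝓕⁻ (Rh τ) x = ((η t x : ℝ) : ℂ) - ((η 0 x : ℝ) : ℂ) := by
      refine intervalIntegral.integral_eq_sub_of_hasDerivAt
        (f := fun τ => ((η τ x : ℝ) : ℂ)) (fun τ hτ => ?_)
        (hrc.intervalIntegrable _ _)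
      rw [Set.uIcc_of_le ht.1] at hτ
      exact h τ ⟨hτ.1, hτ.2.trans ht.2⟩ x
    have e1 : 𝓕⁻ G x = 𝓕⁻ (fun ξ => hat (η 0) ξ) x + ∫ ξ, ek ξ x * P ξ := by
      rw [finv, finv, ← integral_add (ek_int _ (hat (η 0)).integrable x) (ek_int _ hPi x)]
      refine integral_congr_ae (Filter.Eventually.of_forall fun ξ => ?_)
      simp only [hG]; ring
    have e2 : ∫ ξ, ek ξ x * P ξ = ∫ τ in (0 : ℝ)..t, 𝓕⁻ (Rh τ) x := by
      have hFub : Integrable (Function.uncurry fun (ξ τ : ℝ) => ek ξ x * Rh τ ξ)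
          ((volume : Measure ℝ).prod (volume.restrict (Set.Ioc (0 : ℝ) t))) := by
        have h1 : Integrable (fun _ : ℝ => (1 : ℝ)) (volume.restrict (Set.Ioc (0 : ℝ) t)) :=
          integrable_const 1
        refine (hb.mul_prod h1).mono' ?_ (Filter.Eventually.of_forall fun z => ?_)
        · refine Continuous.aestronglyMeasurable ?_
          exact ((ek_cont x).comp continuous_fst).mul (hRc.comp continuous_swap)
        · simp only [Function.uncurry]
          rw [norm_mul, ek_norm, one_mul, mul_one]; exact hRb _ _
      have h3 := integral_integral_swap hFub
      rw [intervalIntegral.integral_of_le ht.1]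
      simp only [finv]
      rw [← h3]
      refine integral_congr_ae (Filter.Eventually.of_forall fun ξ => ?_)
      simp only [hP]
      rw [intervalIntegral.integral_of_le ht.1, integral_const_mul]
    rw [e1, e2, hat_inv, hftc]; ring
  have hfun : 𝓕⁻ G = cc ⇑(η t) := funext hinv
  have hFi : Integrable (𝓕 G) := by
    have h1 : Integrable (𝓕⁻ G) := by rw [hfun, ← cS_coe]; exact (cS (η t)).integrable
    have h2 : 𝓕 G = fun x => 𝓕⁻ G (-x) := by
      ext x; rw [Real.fourierInv_eq_fourier_neg, neg_neg]
    rw [h2]; exact h1.comp_neg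
  have := hGc.fourier_fourierInv_eq hGi hFi
  rw [hfun] at this
  rw [hat_apply, this]

lemma energy_deriv (s : ℝ) (n : ℕ) (hn : s < n) (G Rh : ℝ → ℝ → ℂ) (K : ℝ) (hK : 0 ≤ K)
    (hG : ∀ t ξ, HasDerivAt (fun τ => G τ ξ) (Rh t ξ) t) (hGc : ∀ t, Continuous (G t))
    (hRc : ∀ t, Continuous (Rh t))
    (hGb : ∀ t ξ, ‖G t ξ‖ ≤ K * (1 + |t|) * ((1 + ξ ^ 2) ^ (n + 1))⁻¹)
    (hRb : ∀ t ξ, ‖Rh t ξ‖ ≤ K * ((1 + ξ ^ 2) ^ (n + 1))⁻¹) (t : ℝ) :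
    HasDerivAt (fun τ => ∫ ξ, WW s ξ * ‖G τ ξ‖ ^ 2)
      (∫ ξ, WW s ξ * (2 * ((starRingEnd ℂ) (G t ξ) * Rh t ξ).re)) t := by
  have hq := inv_pow_int (n + 1) (by omega)
  have hWq : ∀ ξ : ℝ, WW s ξ * ((1 + ξ ^ 2) ^ (n + 1))⁻¹ ≤ 1 := by
    intro ξ
    have h1 : WW s ξ ≤ (1 + ξ ^ 2) ^ (n + 1) := by
      unfold WW
      rw [← Real.rpow_natCast (1 + ξ ^ 2) (n + 1)]
      exact Real.rpow_le_rpow_of_exponent_le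
        (show (1 : ℝ) ≤ 1 + ξ ^ 2 by nlinarith [sq_nonneg ξ]) (by push_cast; linarith)
    rw [← div_eq_mul_inv, div_le_one (by positivity)]
    exact h1
  have hbd : ∀ (ξ a c A B : ℝ), 0 ≤ a → 0 ≤ c → 0 ≤ A → 0 ≤ B → a ≤ A * ((1 + ξ ^ 2) ^ (n + 1))⁻¹ →
      c ≤ B * ((1 + ξ ^ 2) ^ (n + 1))⁻¹ → WW s ξ * (a * c) ≤ A * B * ((1 + ξ ^ 2) ^ (n + 1))⁻¹ := by
    intro ξ a c A B ha hc hA hB h1 h2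
    have hqn : 0 ≤ ((1 + ξ ^ 2) ^ (n + 1))⁻¹ := by positivity
    have h3 := mul_le_mul h1 h2 hc (by positivity)
    have h4 := mul_le_mul_of_nonneg_left h3 (WW_pos s ξ).le
    have h5 := mul_le_mul_of_nonneg_right (hWq ξ) (by positivity : 0 ≤ A * B * ((1 + ξ ^ 2) ^ (n + 1))⁻¹)
    linarith
  have hW := WW_cont s
  refine (hasDerivAt_integral_of_dominated_loc_of_deriv_le
    (F := fun τ ξ => WW s ξ * ‖G τ ξ‖ ^ 2)
    (F' := fun τ ξ => WW s ξ * (2 * ((starRingEnd ℂ) (G τ ξ) * Rh τ ξ).re))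
    (bound := fun ξ => 2 * (K * (1 + (|t| + 1)) * K * ((1 + ξ ^ 2) ^ (n + 1))⁻¹))
    (Metric.ball_mem_nhds t one_pos) ?_ ?_ ?_ ?_ ?_ ?_).2
  · refine Filter.Eventually.of_forall fun τ => Continuous.aestronglyMeasurable ?_
    have := hGc τ
    fun_prop
  · refine (hq.const_mul (K * (1 + |t|) * (K * (1 + |t|)))).mono' ?_
      (Filter.Eventually.of_forall fun ξ => ?_)
    · have := hGc t
      exact Continuous.aestronglyMeasurable (by fun_prop)
    · rw [Real.norm_eq_abs, abs_of_nonneg (mul_nonneg (WW_pos s ξ).le (sq_nonneg _)), sq]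
      exact hbd ξ _ _ _ _ (norm_nonneg _) (norm_nonneg _) (by positivity) (by positivity)
        (hGb t ξ) (hGb t ξ)
  · have := hGc t
    have := hRc t
    exact Continuous.aestronglyMeasurable (by fun_prop)
  · refine Filter.Eventually.of_forall fun ξ τ hτ => ?_
    have hτ' : |τ| ≤ |t| + 1 := by
      rw [Metric.mem_ball, Real.dist_eq] at hτ
      have := abs_sub_abs_le_abs_sub τ t
      linarith
    rw [Real.norm_eq_abs, abs_mul, abs_of_pos (WW_pos s ξ), abs_mul, abs_two]
    have h1 : |((starRingEnd ℂ) (G τ ξ) * Rh τ ξ).re| ≤ ‖G τ ξ‖ * ‖Rh τ ξ‖ := by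
      refine (Complex.abs_re_le_norm _).trans ?_
      simp
    have h2 : ‖G τ ξ‖ ≤ K * (1 + (|t| + 1)) * ((1 + ξ ^ 2) ^ (n + 1))⁻¹ := by
      refine (hGb τ ξ).trans ?_
      gcongr
    have h3 := hbd ξ _ _ _ _ (norm_nonneg (G τ ξ)) (norm_nonneg (Rh τ ξ)) (by positivity) hK h2 (hRb τ ξ)
    have h4 := mul_le_mul_of_nonneg_left h1 (WW_pos s ξ).le
    linarith
  · exact (hq.const_mul _).const_mul _
  · refine Filter.Eventually.of_forall fun ξ τ _ => ?_
    have h1 := (hG τ ξ).norm_sq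
    refine (h1.const_mul (WW s ξ)).congr_deriv ?_
    rw [Complex.inner, mul_comm (Rh τ ξ)]

/-- The sup norm of the derivative. -/
def MM (u : 𝓢(ℝ, ℝ)) : ℝ := ‖toBoundedContinuousFunctionCLM ℝ ℝ ℝ (dd u)‖

lemma MM_nonneg (u : 𝓢(ℝ, ℝ)) : 0 ≤ MM u := norm_nonneg _

lemma MM_curve (a : ℝ → 𝓢(ℝ, ℝ)) (ha : Continuous a) : Continuous (fun τ => MM (a τ)) :=
  ((toBoundedContinuousFunctionCLM ℝ ℝ ℝ).continuous.comp (dd.continuous.comp ha)).norm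

lemma MM_bound (u : 𝓢(ℝ, ℝ)) (x : ℝ) : |dd u x| ≤ MM u :=
  (toBoundedContinuousFunctionCLM ℝ ℝ ℝ (dd u)).norm_coe_le_norm x

lemma MM_eq (u : 𝓢(ℝ, ℝ)) : (eLpNorm (deriv ⇑u) ⊤ volume).toReal = MM u := by
  have e0 : deriv ⇑u = ⇑(dd u) := rfl
  rw [e0, eLpNorm_exponent_top]
  have h1 : eLpNormEssSup (⇑(dd u)) volume ≤ ENNReal.ofReal (MM u) :=
    eLpNormEssSup_le_of_ae_bound (Filter.Eventually.of_forall (MM_bound u))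
  have hfin : eLpNormEssSup (⇑(dd u)) volume ≠ ⊤ := ne_top_of_le_ne_top ENNReal.ofReal_ne_top h1
  apply le_antisymm
  · exact ENNReal.toReal_le_of_le_ofReal (MM_nonneg u) h1
  · have h2 : ∀ᵐ x, ‖dd u x‖ₑ ≤ eLpNormEssSup (⇑(dd u)) volume := ae_le_eLpNormEssSup
    have h3 : Dense {x | ‖dd u x‖ₑ ≤ eLpNormEssSup (⇑(dd u)) volume} :=
      Measure.dense_of_ae h2
    have h4 : IsClosed {x | ‖dd u x‖ₑ ≤ eLpNormEssSup (⇑(dd u)) volume} :=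
      isClosed_le (dd u).continuous.enorm continuous_const
    have h5 : ∀ x, ‖dd u x‖ₑ ≤ eLpNormEssSup (⇑(dd u)) volume := by
      intro x
      have : x ∈ closure {x | ‖dd u x‖ₑ ≤ eLpNormEssSup (⇑(dd u)) volume} := h3 x
      rwa [h4.closure_eq] at this
    unfold MM
    rw [BoundedContinuousFunction.norm_le ENNReal.toReal_nonneg]
    intro x
    have := ENNReal.toReal_mono hfin (h5 x)
    rwa [toReal_enorm] at this

lemma HsNorm_eq (s : ℝ) (u : 𝓢(ℝ, ℝ)) : HsNorm s (cc ⇑u) ^ 2 = ENNReal.ofReal (EE s u) := by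
  have e1 : ∀ ξ : ℝ, (jap ξ ^ s * ‖𝓕 (cc ⇑u) ξ‖) ^ 2 = WW s ξ * ‖hat u ξ‖ ^ 2 := by
    intro ξ
    have hp : (0 : ℝ) ≤ 1 + ξ ^ 2 := by positivity
    rw [mul_pow, hat_apply, jap, WW, ← Real.rpow_mul hp, ← Real.rpow_natCast _ 2, ← Real.rpow_mul hp]
    congr 2
    push_cast; ring
  unfold HsNorm EE
  rw [eLpNorm_eq_lintegral_rpow_enorm_toReal (by norm_num) (by norm_num)]
  rw [ofReal_integral_eq_lintegral_ofReal (WW_int s u)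
    (Filter.Eventually.of_forall fun ξ => mul_nonneg (WW_pos s ξ).le (sq_nonneg _))]
  rw [← ENNReal.rpow_natCast, ← ENNReal.rpow_mul]
  norm_num
  refine lintegral_congr fun ξ => ?_
  rw [← e1, ← Real.enorm_of_nonneg (sq_nonneg _), enorm_pow, enorm_mul]
  simp

/-- The spectral right-hand side. -/
def RR (ε μ T : ℝ) (η : ℝ → 𝓢(ℝ, ℝ)) (τ ξ : ℝ) : ℂ :=
  -(((Real.sqrt (Tsymb μ ξ) : ℝ) : ℂ) * hat (dd (η (cl T τ))) ξ +
    (ε : ℂ) * hat (pm (η (cl T τ)) (dd (η (cl T τ)))) ξ)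

lemma sqrt_T_le (μ ξ : ℝ) (hμ : 0 < μ) : ‖((Real.sqrt (Tsymb μ ξ) : ℝ) : ℂ)‖ ≤ 1 := by
  rw [Complex.norm_real, Real.norm_eq_abs, abs_of_nonneg (Real.sqrt_nonneg _)]
  exact Real.sqrt_le_one.2 (Tsymb_le_one μ ξ hμ)

lemma RR_cont (ε μ T : ℝ) (hμ : 0 < μ) (η : ℝ → 𝓢(ℝ, ℝ)) (hη : Continuous η) :
    Continuous (Function.uncurry (RR ε μ T η)) := by
  have ha : Continuous (fun τ => η (cl T τ)) := hη.comp (cl_cont T)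
  have hb : Continuous (fun τ => dd (η (cl T τ))) := dd.continuous.comp ha
  have h1 := curve_joint _ (hat_curve _ hb)
  have h2 := curve_joint _ (hat_curve _ (pm_curve _ _ ha hb))
  have h3 : Continuous (fun z : ℝ × ℝ => ((Real.sqrt (Tsymb μ z.2) : ℝ) : ℂ)) :=
    Complex.continuous_ofReal.comp (Real.continuous_sqrt.comp ((Tsymb_cont μ hμ).comp continuous_snd))
  exact ((h3.mul h1).add (continuous_const.mul h2)).neg

lemma RR_bound (ε μ T : ℝ) (hε : 0 < ε) (hε1 : ε ≤ 1) (hμ : 0 < μ) (hT : 0 ≤ T)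
    (η : ℝ → 𝓢(ℝ, ℝ)) (hη : Continuous η) (N : ℕ) :
    ∃ K : ℝ, 0 ≤ K ∧ ∀ τ ξ, ‖RR ε μ T η τ ξ‖ ≤ K * ((1 + ξ ^ 2) ^ N)⁻¹ := by
  have hb : Continuous (fun τ => dd (η τ)) := dd.continuous.comp hη
  obtain ⟨K1, h1, h1'⟩ := curve_bound _ (hat_curve _ hb) T hT N
  obtain ⟨K2, h2, h2'⟩ := curve_bound _ (hat_curve _ (pm_curve _ _ hη hb)) T hT N
  refine ⟨K1 + K2, by positivity, fun τ ξ => ?_⟩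
  unfold RR
  rw [norm_neg, add_mul]
  refine (norm_add_le _ _).trans (add_le_add ?_ ?_)
  · rw [norm_mul]
    refine (mul_le_of_le_one_left (norm_nonneg _) (sqrt_T_le μ ξ hμ)).trans (h1' τ ξ)
  · rw [norm_mul]
    refine (mul_le_of_le_one_left (norm_nonneg _) ?_).trans (h2' τ ξ)
    rw [Complex.norm_real, Real.norm_eq_abs, abs_of_pos hε]; exact hε1

lemma RR_inv (ε μ T : ℝ) (hμ : 0 < μ) (η : ℝ → 𝓢(ℝ, ℝ)) (t : ℝ) (ht : t ∈ Set.Icc 0 T) (x : ℝ) :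
    -(sqrtTmul μ (cc (deriv (⇑(η t)))) x +
      (ε / 2 : ℂ) * ((deriv (fun y => (η t y) ^ 2) x : ℝ) : ℂ)) = 𝓕⁻ (RR ε μ T η t) x := by
  have hd : deriv (fun y => (η t y) ^ 2) x = 2 * pm (η t) (dd (η t)) x := by
    have := ((dd_hasDerivAt (η t) x).pow 2).deriv
    rw [pm_apply]
    refine Eq.trans this ?_
    push_cast; ring
  have hi1 : Integrable (fun ξ => ((Real.sqrt (Tsymb μ ξ) : ℝ) : ℂ) * hat (dd (η t)) ξ) := by
    refine (hat (dd (η t))).integrable.bdd_mul (c := 1) ?_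
      (Filter.Eventually.of_forall fun ξ => sqrt_T_le μ ξ hμ)
    exact (Complex.continuous_ofReal.comp
      (Real.continuous_sqrt.comp (Tsymb_cont μ hμ))).aestronglyMeasurable
  have hi2 : Integrable (fun ξ => (ε : ℂ) * hat (pm (η t) (dd (η t))) ξ) :=
    (hat (pm (η t) (dd (η t)))).integrable.const_mul _
  have e1 : sqrtTmul μ (cc (deriv (⇑(η t)))) x =
      ∫ ξ, ek ξ x * (((Real.sqrt (Tsymb μ ξ) : ℝ) : ℂ) * hat (dd (η t)) ξ) := by
    unfold sqrtTmul
    rw [finv]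
    rfl
  have e2 : (ε / 2 : ℂ) * ((deriv (fun y => (η t y) ^ 2) x : ℝ) : ℂ) =
      ∫ ξ, ek ξ x * ((ε : ℂ) * hat (pm (η t) (dd (η t))) ξ) := by
    have h1 : ∀ ξ, ek ξ x * ((ε : ℂ) * hat (pm (η t) (dd (η t))) ξ) =
      (ε : ℂ) * (ek ξ x * hat (pm (η t) (dd (η t))) ξ) := fun ξ => by ring
    simp only [h1]
    rw [integral_const_mul, ← finv (fun ξ => hat (pm (η t) (dd (η t))) ξ), hat_inv, hd]
    push_cast; ring
  rw [e1, e2, finv, ← integral_add (ek_int _ hi1 x) (ek_int _ hi2 x), ← integral_neg]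
  refine integral_congr_ae (Filter.Eventually.of_forall fun ξ => ?_)
  simp only [RR, cl_eq T t ht]
  ring

lemma RR_PP (ε μ T : ℝ) (η : ℝ → 𝓢(ℝ, ℝ)) (t : ℝ) (ht : t ∈ Set.Icc 0 T) (ξ : ℝ) :
    ((starRingEnd ℂ) (hat (η t) ξ) * RR ε μ T η t ξ).re =
      -ε * PP (η t) (pm (η t) (dd (η t))) ξ := by
  simp only [RR, cl_eq T t ht, PP, hat_dd]
  set a := hat (η t) ξ
  set b := hat (pm (η t) (dd (η t))) ξ
  simp
  ring

lemma energy_ineq (s C : ℝ) (hC : 0 ≤ C)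
    (hkey : ∀ (u : 𝓢(ℝ, ℝ)) (M : ℝ), 0 ≤ M → (∀ x, |dd u x| ≤ M) →
      |∫ ξ, WW s ξ * PP u (pm u (dd u)) ξ| ≤ C * M * EE s u)
    (ε μ T : ℝ) (hε : 0 < ε) (hε1 : ε ≤ 1) (hμ : 0 < μ) (hT : 0 < T)
    (η : ℝ → 𝓢(ℝ, ℝ)) (hη : Continuous η)
    (h : ∀ t ∈ Set.Icc (0 : ℝ) T, ∀ x, HasDerivAt (fun τ => ((η τ x : ℝ) : ℂ))
      (𝓕⁻ (RR ε μ T η t) x) t) (t : ℝ) (ht : t ∈ Set.Icc (0 : ℝ) T) :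
    EE s (η t) ≤ Real.exp ((2 * C + 1) * ε * ∫ τ in (0 : ℝ)..t, MM (η τ)) * EE s (η 0) := by
  obtain ⟨n, hn⟩ := exists_nat_gt s
  obtain ⟨K1, hK1, hRb⟩ := RR_bound ε μ T hε hε1 hμ hT.le η hη (n + 1)
  set Rh := RR ε μ T η with hRh
  have hRc := RR_cont ε μ T hμ η hη
  rw [← hRh] at hRc
  have hRc1 : ∀ τ, Continuous (Rh τ) := fun τ => hRc.comp (by fun_prop : Continuous fun ξ => (τ, ξ))
  have hRc2 : ∀ ξ, Continuous (fun τ => Rh τ ξ) :=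
    fun ξ => hRc.comp (by fun_prop : Continuous fun τ => (τ, ξ))
  set G : ℝ → ℝ → ℂ := fun t ξ => hat (η 0) ξ + ∫ τ in (0 : ℝ)..t, Rh τ ξ with hGdef
  have hode : ∀ t ∈ Set.Icc (0 : ℝ) T, ∀ ξ, hat (η t) ξ = G t ξ := fun t ht ξ =>
    fourier_ode Rh hRc _ ((inv_pow_int (n + 1) (by omega)).const_mul K1) hRb η T h t ht ξ
  obtain ⟨K0, hK0⟩ : ∃ K0, K0 = (2 ^ (n + 1 - 1) * (SchwartzMap.seminorm ℝ 0 0 (hat (η 0)) +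
    SchwartzMap.seminorm ℝ (2 * (n + 1)) 0 (hat (η 0)))) := ⟨_, rfl⟩
  have hK0n : 0 ≤ K0 := by rw [hK0]; positivity
  have hb0 : ∀ ξ, ‖hat (η 0) ξ‖ ≤ K0 * ((1 + ξ ^ 2) ^ (n + 1))⁻¹ := by
    intro ξ; rw [hK0]; exact schw_bound (n + 1) (hat (η 0)) ξ
  have hder := energy_deriv s n hn G Rh (K0 + K1) (by positivity)
    (fun t ξ => by
      have := intervalIntegral.integral_hasDerivAt_right ((hRc2 ξ).intervalIntegrable 0 t)
        ((hRc2 ξ).stronglyMeasurableAtFilter _ _) (hRc2 ξ).continuousAt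
      exact this.const_add _)
    (fun t => by
      refine (hat (η 0)).continuous.add ?_
      refine intervalIntegral.continuous_parametric_intervalIntegral_of_continuous' ?_ 0 t
      exact hRc.comp continuous_swap)
    hRc1
    (fun t ξ => by
      have h1 := intervalIntegral.norm_integral_le_of_norm_le_const (a := (0 : ℝ)) (b := t)
        (f := fun τ => Rh τ ξ) (C := K1 * ((1 + ξ ^ 2) ^ (n + 1))⁻¹) fun τ _ => hRb τ ξ
      rw [sub_zero] at h1
      have h2 := (norm_add_le (hat (η 0) ξ) (∫ τ in (0 : ℝ)..t, Rh τ ξ))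
      have h3 := hb0 ξ
      have hq : 0 ≤ ((1 + ξ ^ 2) ^ (n + 1))⁻¹ := by positivity
      have h4 : 0 ≤ K0 * |t| * ((1 + ξ ^ 2) ^ (n + 1))⁻¹ := by positivity
      have h5 : 0 ≤ K1 * ((1 + ξ ^ 2) ^ (n + 1))⁻¹ := by positivity
      simp only [hGdef]
      nlinarith)
    (fun t ξ => (hRb t ξ).trans (mul_le_mul_of_nonneg_right (by linarith) (by positivity)))
  set E : ℝ → ℝ := fun τ => ∫ ξ, WW s ξ * ‖G τ ξ‖ ^ 2 with hE
  have hEE : ∀ t ∈ Set.Icc (0 : ℝ) T, E t = EE s (η t) := by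
    intro t ht
    simp only [hE, EE]
    refine integral_congr_ae (Filter.Eventually.of_forall fun ξ => ?_)
    simp only [hode t ht ξ]
  set D : ℝ → ℝ := fun t => ∫ ξ, WW s ξ * (2 * ((starRingEnd ℂ) (G t ξ) * Rh t ξ).re) with hD
  have hDle : ∀ t ∈ Set.Icc (0 : ℝ) T, D t ≤ (2 * C + 1) * ε * MM (η t) * E t := by
    intro t ht
    have e : D t = (-(2 * ε)) * ∫ ξ, WW s ξ * PP (η t) (pm (η t) (dd (η t))) ξ := by
      simp only [hD]
      rw [← integral_const_mul]
      refine integral_congr_ae (Filter.Eventually.of_forall fun ξ => ?_)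
      simp only [← hode t ht ξ]
      rw [RR_PP ε μ T η t ht ξ]
      ring
    rw [e, hEE t ht]
    have h1 := hkey (η t) (MM (η t)) (MM_nonneg _) (MM_bound _)
    have h2 := (abs_le.1 h1).1
    have h3 : 0 ≤ ε * MM (η t) * EE s (η t) :=
      mul_nonneg (mul_nonneg hε.le (MM_nonneg _)) (EE_nonneg _ _)
    nlinarith
  set c := (2 * C + 1) * ε with hc
  have hMc := MM_curve η hη
  set I : ℝ → ℝ := fun t => ∫ τ in (0 : ℝ)..t, MM (η τ) with hI
  have hId : ∀ t, HasDerivAt I (MM (η t)) t := fun t =>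
    intervalIntegral.integral_hasDerivAt_right (hMc.intervalIntegrable 0 t)
        (hMc.stronglyMeasurableAtFilter _ _) hMc.continuousAt
  have hFd : ∀ t, HasDerivAt (fun t => E t * Real.exp (-(c * I t)))
      (D t * Real.exp (-(c * I t)) + E t * (Real.exp (-(c * I t)) * (-(c * MM (η t))))) t :=
    fun t => (hder t).mul (((hId t).const_mul c).neg.exp)
  have hanti : AntitoneOn (fun t => E t * Real.exp (-(c * I t))) (Set.Icc 0 T) := by
    refine antitoneOn_of_deriv_nonpos (convex_Icc 0 T)
      (fun t _ => (hFd t).continuousAt.continuousWithinAt)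
      (fun t _ => (hFd t).differentiableAt.differentiableWithinAt) fun t ht => ?_
    rw [(hFd t).deriv]
    have h1 := hDle t (interior_subset ht)
    have h2 := Real.exp_pos (-(c * I t))
    nlinarith [mul_le_mul_of_nonneg_right h1 h2.le]
  have hfin := hanti ⟨le_rfl, hT.le⟩ ht ht.1
  have hI0 : I 0 = 0 := intervalIntegral.integral_same
  simp only [hI0, mul_zero, neg_zero, Real.exp_zero, mul_one] at hfin
  rw [hEE t ht, hEE 0 ⟨le_rfl, hT.le⟩] at hfin
  have h6 := mul_le_mul_of_nonneg_left hfin (Real.exp_pos (c * I t)).le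
  have h7 : Real.exp (c * I t) * (EE s (η t) * Real.exp (-(c * I t))) = EE s (η t) := by
    rw [Real.exp_neg]; field_simp
  rw [h7] at h6
  exact h6

/-- Grönwall-type energy bound for the Whitham equation: for `s > 3/2`,
`ε, μ ∈ (0,1]`, there is `c = c(s)` such that any Schwartz-valued `C¹`-in-time solution of
`∂_t η + √T_μ(D) ∂_x η + (ε/2) ∂_x(η²) = 0` on `[0,T]` with `η(0) = η₀` satisfies
`‖η(t)‖_{H^s}² ≤ exp(c ε ∫_0^t ‖∂_x η(τ)‖_{L^∞} dτ) ‖η₀‖_{H^s}²` for all `t ∈ [0,T]`. -/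
theorem whitham_gronwall_bound (s : ℝ) (hs : 3 / 2 < s) :
    ∃ c : ℝ, 0 < c ∧
      ∀ ε μ : ℝ, 0 < ε → ε ≤ 1 → 0 < μ → μ ≤ 1 →
        ∀ T : ℝ, 0 < T →
          ∀ η : ℝ → 𝓢(ℝ, ℝ), Continuous η →
            -- the Whitham equation `∂_t η = −(√T_μ(D) ∂_x η + (ε/2) ∂_x(η²))` on `[0,T]`
            (∀ t ∈ Set.Icc (0 : ℝ) T, ∀ x : ℝ,
              HasDerivAt (fun τ => ((η τ x : ℝ) : ℂ))
                (-(sqrtTmul μ (cc (deriv (⇑(η t)))) x +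
                    (ε / 2 : ℂ) * ((deriv (fun y => (η t y) ^ 2) x : ℝ) : ℂ))) t) →
            ∀ t ∈ Set.Icc (0 : ℝ) T,
              HsNorm s (cc ⇑(η t)) ^ 2
                ≤ ENNReal.ofReal
                    (Real.exp (c * ε *
                      ∫ τ in (0 : ℝ)..t, (eLpNorm (deriv (⇑(η τ))) ⊤ volume).toReal)) *
                  HsNorm s (cc ⇑(η 0)) ^ 2 := by
  obtain ⟨C, hC, hkey⟩ := key s (by linarith)
  refine ⟨2 * C + 1, by positivity, ?_⟩
  intro ε μ hε hε1 hμ _ T hT η hη h t ht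
  have h' : ∀ t ∈ Set.Icc (0 : ℝ) T, ∀ x, HasDerivAt (fun τ => ((η τ x : ℝ) : ℂ))
      (𝓕⁻ (RR ε μ T η t) x) t := by
    intro t ht x
    rw [← RR_inv ε μ T hμ η t ht x]
    exact h t ht x
  have hmain := energy_ineq s C hC hkey ε μ T hε hε1 hμ hT η hη h' t ht
  simp only [MM_eq]
  rw [HsNorm_eq, HsNorm_eq, ← ENNReal.ofReal_mul (Real.exp_pos _).le]
  exact ENNReal.ofReal_le_ofReal hmain
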